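/- arXiv:1905.08670 — 3 statements merged into one kernel-verified Lean document; each statement's English description precedes it below -/
import Mathlib

section
/- There exists a function g : ℕ → ℕ such that for every finite simple graph G, the degeneracy of G is at most g(ava(G)); that is, every nonempty (induced) subgraph of G has a vertex of degree at most g(ava(G)). -/
open Function

section Defs

variable {V : Type*}

/-- The vertex set `S` contains a directed cycle of the digraph `D`, i.e. there is a
closed directed walk of positive length all of whose vertices lie in `S`. -/
def HasDicycle (D : V → V → Prop) (S : Set V) : Prop :=
  ∃ v, Relation.TransGen (fun a b => a ∈ S ∧ b ∈ S ∧ D a b) v v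

/-- A coloring of the vertices of the digraph `D` with `k` colors all of whose color
classes are acyclic. -/
def IsAcyclicColoring (D : V → V → Prop) {k : ℕ} (c : V → Fin k) : Prop :=
  ∀ i, ¬ HasDicycle D (c ⁻¹' {i})

/-- A complete acyclic coloring of the digraph `D` with exactly `k` colors: every color is
used, every color class is acyclic, and the union of any two distinct color classes
contains a directed cycle. -/
def IsCompleteAcyclicColoring (D : V → V → Prop) {k : ℕ} (c : V → Fin k) : Prop :=
  Surjective c ∧ IsAcyclicColoring D c ∧
    ∀ i j : Fin k, i ≠ j → HasDicycle D (c ⁻¹' {i} ∪ c ⁻¹' {j})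

/-- The dichromatic number: the minimum number of colors in an acyclic coloring. -/
noncomputable def dichromaticNumber (D : V → V → Prop) : ℕ :=
  sInf {k | ∃ c : V → Fin k, IsAcyclicColoring D c}

/-- The adichromatic number: the maximum number of colors in a complete acyclic coloring. -/
noncomputable def adichromaticNumber (D : V → V → Prop) : ℕ :=
  sSup {k | ∃ c : V → Fin k, IsCompleteAcyclicColoring D c}

/-- A coloring of the vertices of the graph `G` all of whose color classes induce forests. -/
def IsArborealColoring (G : SimpleGraph V) {k : ℕ} (c : V → Fin k) : Prop :=
  ∀ i, (G.induce (c ⁻¹' {i})).IsAcyclic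

/-- A complete arboreal coloring of `G` with exactly `k` colors: every color is used, every
color class induces a forest, and the union of any two distinct color classes contains a
cycle. -/
def IsCompleteArborealColoring (G : SimpleGraph V) {k : ℕ} (c : V → Fin k) : Prop :=
  Surjective c ∧ IsArborealColoring G c ∧
    ∀ i j : Fin k, i ≠ j → ¬ (G.induce (c ⁻¹' {i} ∪ c ⁻¹' {j})).IsAcyclic

/-- The vertex arboricity: the minimum number of colors in an arboreal coloring. -/
noncomputable def vertexArboricity (G : SimpleGraph V) : ℕ :=
  sInf {k | ∃ c : V → Fin k, IsArborealColoring G c}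

/-- The a-vertex arboricity: the maximum number of colors in a complete arboreal coloring. -/
noncomputable def avertexArboricity (G : SimpleGraph V) : ℕ :=
  sSup {k | ∃ c : V → Fin k, IsCompleteArborealColoring G c}

/-- The minimum size of a directed feedback vertex set of the digraph `D`. -/
noncomputable def digraphFVSNumber [Fintype V] (D : V → V → Prop) : ℕ :=
  sInf {n | ∃ F : Finset V, F.card = n ∧ ¬ HasDicycle D ((↑F : Set V)ᶜ)}

/-- The minimum size of a feedback vertex set of the graph `G`. -/
noncomputable def graphFVSNumber [Fintype V] (G : SimpleGraph V) : ℕ :=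
  sInf {n | ∃ F : Finset V, F.card = n ∧ (G.induce ((↑F : Set V)ᶜ)).IsAcyclic}

/-- A complete coloring in the sense of the diachromatic number: all classes are acyclic
and for every ordered pair `(i, j)` of distinct colors there is an arc with tail colored
`j` and head colored `i`. -/
def IsCompleteDiColoring (D : V → V → Prop) {k : ℕ} (c : V → Fin k) : Prop :=
  Surjective c ∧ IsAcyclicColoring D c ∧
    ∀ i j : Fin k, i ≠ j → ∃ u v, D u v ∧ c u = j ∧ c v = i

/-- The diachromatic number of the digraph `D`. -/
noncomputable def diachromaticNumber (D : V → V → Prop) : ℕ :=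
  sSup {k | ∃ c : V → Fin k, IsCompleteDiColoring D c}

/-- A complete proper coloring of the graph `G`: proper, surjective, and any two distinct
colors appear together on some edge. -/
def IsCompleteProperColoring (G : SimpleGraph V) {k : ℕ} (c : V → Fin k) : Prop :=
  Surjective c ∧ (∀ u v, G.Adj u v → c u ≠ c v) ∧
    ∀ i j : Fin k, i ≠ j → ∃ u v, G.Adj u v ∧ c u = i ∧ c v = j

/-- The achromatic number: the maximum number of colors in a complete proper coloring. -/
noncomputable def achromaticNumber (G : SimpleGraph V) : ℕ :=
  sSup {k | ∃ c : V → Fin k, IsCompleteProperColoring G c}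

/-- The subdigraph of `D` induced by the vertex set `S`. -/
def induceDigraph (D : V → V → Prop) (S : Set V) : S → S → Prop :=
  fun a b => D a.1 b.1

/-- `D` is an orientation of the simple graph `G`: every arc of `D` is an edge of `G`, and
every edge of `G` is given exactly one of its two possible directions. -/
def IsOrientation (G : SimpleGraph V) (D : V → V → Prop) : Prop :=
  (∀ u v, D u v → G.Adj u v) ∧ ∀ u v, G.Adj u v → Xor' (D u v) (D v u)

end Defs

/-!
Fix `k = ava(G)` and an independent set `B`. Every `k`-coloring `f` of `B` extends to an arboreal
`k`-coloring of `G`: among the extensions of `f` by natural numbers whose classes induce forests, a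
minimal one cannot use a color `≥ k`, since it would then be complete with more than `k` colors.
For `B = ∅`, splitting each forest into two independent sets shows that `G` is properly
`2k`-colorable.

Now let `B ⊆ S`. An extension of `f` has at most `|S|` monochromatic edges between `S` and `B`,
whatever `f` is. If `f` is uniformly random, then among `k` prescribed neighbors in `B` of a vertex
`a` all colors occur with probability at least `k ^ (-k)`, and then one of them has the color that
`a` receives in the extension. Hence there are only `O_k(|S|)` edges between `S` and `B`, and
summing over the color classes of a proper `2k`-coloring bounds the average degree of `G[S]`.
-/

open Finset

section ForestsAndInteredges

variable {V : Type*} {G : SimpleGraph V}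

theorem isAcyclic_induce_of_subset {s t : Set V} (hst : s ⊆ t) (ht : (G.induce t).IsAcyclic) :
    (G.induce s).IsAcyclic :=
  ht.embedding (SimpleGraph.induceHomOfLE G hst)

theorem isAcyclic_induce_insert_of_isIndepSet {B : Set V} (hB : G.IsIndepSet B) (v : V) :
    (G.induce (insert v B)).IsAcyclic := by
  refine (SimpleGraph.isAcyclic_starGraph ⟨v, Set.mem_insert v B⟩).anti ?_
  rintro ⟨x, hx⟩ ⟨y, hy⟩ hxy
  have hadj : G.Adj x y := hxy
  rw [SimpleGraph.starGraph_adj]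
  refine ⟨hxy.ne, ?_⟩
  simp only [Subtype.mk.injEq]
  by_contra! hne
  exact hB (hx.resolve_left hne.1) (hy.resolve_left hne.2) hadj.ne hadj

theorem card_edgeFinset_le_card_of_isAcyclic [Fintype V] [Fintype G.edgeSet] (hG : G.IsAcyclic) :
    #G.edgeFinset ≤ Fintype.card V := by
  classical
  cases isEmpty_or_nonempty V
  · simp [Subsingleton.elim G ⊥]
  · obtain ⟨T, hGT, -, hT⟩ :=
      SimpleGraph.connected_top.exists_isTree_le_of_le_of_isAcyclic le_top hG
    calc #G.edgeFinset ≤ #T.edgeFinset := card_le_card (SimpleGraph.edgeFinset_mono hGT)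
      _ ≤ Fintype.card V := hT.card_edgeFinset ▸ Nat.le_succ _

theorem card_interedges_le_card_of_isAcyclic [DecidableRel G.Adj] (hG : G.IsAcyclic)
    {S B : Finset V} (hBS : B ⊆ S) (hB : G.IsIndepSet (B : Set V)) :
    #(G.interedges S B) ≤ #S := by
  classical
  have edge_injOn : Set.InjOn (fun e : V × V => s(e.1, e.2)) (G.interedges S B : Set (V × V)) := by
    rintro ⟨a, b⟩ hab ⟨a', b'⟩ hab' heq
    simp only [mem_coe, SimpleGraph.mk_mem_interedges_iff] at hab hab'
    obtain ⟨rfl, rfl⟩ | ⟨rfl, rfl⟩ := Sym2.eq_iff.mp heq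
    · rfl
    · exact absurd hab.2.2 (hB hab'.2.1 hab.2.1 hab.2.2.ne)
  have edge_mem : (G.interedges S B).image (fun e => s(e.1, e.2)) ⊆
      (G.induce (S : Set V)).edgeFinset.image (Sym2.map Subtype.val) := by
    simp only [image_subset_iff, Prod.forall, SimpleGraph.mk_mem_interedges_iff]
    rintro a b ⟨ha, hb, hab⟩
    exact mem_image.mpr ⟨s(⟨a, ha⟩, ⟨b, hBS hb⟩), SimpleGraph.mem_edgeFinset.mpr hab, rfl⟩
  calc #(G.interedges S B) = #((G.interedges S B).image (fun e => s(e.1, e.2))) :=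
        (card_image_of_injOn edge_injOn).symm
    _ ≤ #((G.induce (S : Set V)).edgeFinset.image (Sym2.map Subtype.val)) := card_le_card edge_mem
    _ ≤ #(G.induce (S : Set V)).edgeFinset := card_image_le
    _ ≤ Fintype.card (S : Set V) := card_edgeFinset_le_card_of_isAcyclic (hG.induce _)
    _ = #S := Fintype.card_coe S

theorem card_interedges_eq_sum [DecidableRel G.Adj] (S T : Finset V) :
    #(G.interedges S T) = ∑ a ∈ S, #{b ∈ T | G.Adj a b} := by
  simp only [SimpleGraph.interedges_def, card_filter, sum_product]

theorem card_interedges_self_eq_sum_coloring {α : Type*} [Fintype α] [DecidableEq α]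
    [DecidableRel G.Adj] (S : Finset V) (p : V → α) :
    #(G.interedges S S) = ∑ i, #(G.interedges S {v ∈ S | p v = i}) := by
  simp only [card_interedges_eq_sum]
  rw [sum_comm]
  refine sum_congr rfl fun a _ => ?_
  simp only [filter_comm (p := fun v => p v = _)]
  exact card_eq_sum_card_fiberwise fun _ _ => mem_coe.mpr (mem_univ _)

end ForestsAndInteredges

/-- An arboreal coloring with an arbitrary type of colors: every color class induces a forest.
For colors in `Fin k` this is `IsArborealColoring`. -/
def IsForestColoring {V α : Type*} (G : SimpleGraph V) (c : V → α) : Prop :=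
  ∀ i, (G.induce (c ⁻¹' {i})).IsAcyclic

/-- The spanning subgraph of `G` formed by the edges whose ends have the same color. -/
def monochromaticSubgraph {V α : Type*} (G : SimpleGraph V) (c : V → α) : SimpleGraph V where
  Adj u v := G.Adj u v ∧ c u = c v
  symm := ⟨fun _ _ h => ⟨h.1.symm, h.2.symm⟩⟩
  loopless := ⟨fun _ h => h.1.ne rfl⟩

instance {V α : Type*} [DecidableEq α] (G : SimpleGraph V) [DecidableRel G.Adj] (c : V → α) :
    DecidableRel (monochromaticSubgraph G c).Adj :=
  fun u v => inferInstanceAs (Decidable (G.Adj u v ∧ c u = c v))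

section ForestColorings

variable {V α : Type*} {G : SimpleGraph V}

theorem color_eq_of_mem_support {c : V → α} {u v w : V}
    (p : (monochromaticSubgraph G c).Walk u v) (hw : w ∈ p.support) : c w = c u := by
  induction p with
  | nil => rw [SimpleGraph.Walk.mem_support_nil_iff.mp hw]
  | cons h p ih =>
    obtain rfl | hw := List.mem_cons.mp hw
    · rfl
    · exact (ih hw).trans h.2.symm

theorem IsForestColoring.isAcyclic_monochromaticSubgraph {c : V → α} (hc : IsForestColoring G c) :
    (monochromaticSubgraph G c).IsAcyclic := by
  intro v p hp
  have p_mem : ∀ w ∈ p.support, w ∈ c ⁻¹' {c v} := fun w hw => color_eq_of_mem_support p hw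
  have class_acyclic : ((monochromaticSubgraph G c).induce (c ⁻¹' {c v})).IsAcyclic :=
    (hc (c v)).anti fun _ _ h => h.1
  refine class_acyclic (p.induce _ p_mem) ?_
  rwa [← SimpleGraph.Walk.isCycle_map_iff_of_injective
    (f := (SimpleGraph.Embedding.induce (c ⁻¹' {c v})).toHom) Subtype.val_injective,
    SimpleGraph.Walk.map_induce]

theorem IsForestColoring.colorable {k : ℕ} {c : V → Fin k} (hc : IsForestColoring G c) :
    G.Colorable (k * 2) := by
  obtain ⟨q⟩ := hc.isAcyclic_monochromaticSubgraph.colorable_two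
  let C : G.Coloring (Fin k × Fin 2) := SimpleGraph.Coloring.mk (fun v => (c v, q v)) fun h heq =>
    q.valid ⟨h, congrArg Prod.fst heq⟩ (congrArg Prod.snd heq)
  simpa using C.colorable

theorem isForestColoring_of_injOn_compl {B : Set V} {c : V → α} (hB : G.IsIndepSet B)
    (hc : Set.InjOn c Bᶜ) : IsForestColoring G c := by
  intro i
  obtain hi | ⟨v, hv⟩ := ((c ⁻¹' {i}) \ B).eq_empty_or_nonempty
  · have hiB : c ⁻¹' {i} ⊆ B := Set.sdiff_eq_empty.mp hi
    exact SimpleGraph.isAcyclic_bot.anti fun x y h =>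
      hB (hiB x.2) (hiB y.2) (Subtype.coe_ne_coe.mpr h.ne) h
  · refine isAcyclic_induce_of_subset (fun w hw => ?_) (isAcyclic_induce_insert_of_isIndepSet hB v)
    by_cases hwB : w ∈ B
    · exact Or.inr hwB
    · exact Or.inl (hc hwB hv.2 (hw.trans hv.1.symm))

theorem card_filter_leftInverse_le_card_interedges [Fintype α] [DecidableEq α]
    [DecidableRel G.Adj] {S B : Finset V} {q : V → ℕ} (t : ∀ a, Fin (q a) × α ↪ V)
    (htB : ∀ a x, t a x ∈ B) (hta : ∀ a x, G.Adj a (t a x)) {f c : V → α} (hcf : Set.EqOn c f B) :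
    #{x ∈ S.sigma fun a => (univ : Finset (Fin (q a))) | ∀ i, f (t x.1 (x.2, i)) = i} ≤
      #((monochromaticSubgraph G c).interedges S B) := by
  refine card_le_card_of_injOn (fun x => (x.1, t x.1 (x.2, c x.1))) ?_ ?_
  · rintro ⟨a, j⟩ hx
    simp only [mem_coe, mem_filter, mem_sigma, mem_univ, and_true] at hx
    have color_eq : c a = c (t a (j, c a)) := ((hcf (htB a _)).trans (hx.2 (c a))).symm
    exact (SimpleGraph.mk_mem_interedges_iff _).mpr ⟨hx.1, htB a _, hta a _, color_eq⟩
  · rintro ⟨a, j⟩ - ⟨a', j'⟩ - h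
    obtain ⟨rfl, h⟩ : a = a' ∧ t a (j, c a) = t a' (j', c a') := Prod.mk.inj h
    obtain ⟨rfl, -⟩ := Prod.mk.inj ((t a).injective h)
    rfl

end ForestColorings

/-- `c` is first-fit off `B`: no vertex outside `B` can be moved to a smaller color without
closing a cycle. -/
def IsFirstFitOff {V : Type*} (G : SimpleGraph V) (B : Set V) (c : V → ℕ) : Prop :=
  ∀ v ∉ B, ∀ i < c v, ¬ (G.induce (insert v (c ⁻¹' {i}))).IsAcyclic

section FirstFit

variable {V : Type*} {G : SimpleGraph V} {B : Set V} {c : V → ℕ}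

theorem IsForestColoring.update {α : Type*} [DecidableEq V] {c : V → α} (hc : IsForestColoring G c)
    {v : V} {i : α} (hi : (G.induce (insert v (c ⁻¹' {i}))).IsAcyclic) :
    IsForestColoring G (Function.update c v i) := by
  intro j
  by_cases hj : j = i
  · subst hj
    refine isAcyclic_induce_of_subset (fun w hw => ?_) hi
    by_cases hwv : w = v
    · exact Or.inl hwv
    · exact Or.inr (by simpa [hwv] using hw)
  · refine isAcyclic_induce_of_subset (fun w hw => ?_) (hc j)
    by_cases hwv : w = v
    · subst hwv
      exact absurd (by simpa using hw) (Ne.symm hj)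
    · simpa [hwv] using hw

theorem IsForestColoring.exists_isFirstFitOff [Finite V] (hc : IsForestColoring G c) (B : Set V) :
    ∃ c' : V → ℕ, IsForestColoring G c' ∧ Set.EqOn c' c B ∧ IsFirstFitOff G B c' := by
  classical
  obtain ⟨c', ⟨hc', hBc'⟩, hmin⟩ := exists_minimal_of_wellFoundedLT
    (fun c' : V → ℕ => IsForestColoring G c' ∧ Set.EqOn c' c B) ⟨c, hc, Set.eqOn_refl c B⟩
  refine ⟨c', hc', hBc', fun v hv i hi hacyclic => ?_⟩
  have update_eqOn : Set.EqOn (Function.update c' v i) c B := fun b hb => by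
    rw [Function.update_of_ne (ne_of_mem_of_not_mem hb hv), hBc' hb]
  have update_lt : Function.update c' v i < c' := update_lt_self_iff.mpr hi
  exact update_lt.not_ge (hmin ⟨hc'.update hacyclic, update_eqOn⟩ update_lt.le)

theorem IsFirstFitOff.exists_notMem_color_eq (hc : IsFirstFitOff G B c) (hB : G.IsIndepSet B)
    {w : V} (hw : w ∉ B) {j : ℕ} (hj : j ≤ c w) : ∃ v ∉ B, c v = j := by
  obtain rfl | hj := hj.eq_or_lt
  · exact ⟨w, hw, rfl⟩
  by_contra! hclass
  refine hc w hw j hj (isAcyclic_induce_of_subset (Set.insert_subset_insert fun v hv => ?_)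
    (isAcyclic_induce_insert_of_isIndepSet hB w))
  by_contra hvB
  exact hclass v hvB hv

theorem IsFirstFitOff.isCompleteArborealColoring (hff : IsFirstFitOff G B c)
    (hc : IsForestColoring G c) (hB : G.IsIndepSet B) {w : V} (hw : w ∉ B)
    (hmax : ∀ v, c v < c w + 1) :
    IsCompleteArborealColoring G fun v => (⟨c v, hmax v⟩ : Fin (c w + 1)) := by
  have class_eq (i : Fin (c w + 1)) :
      (fun v => (⟨c v, hmax v⟩ : Fin (c w + 1))) ⁻¹' {i} = c ⁻¹' {i.val} := by
    ext v
    simp [Fin.ext_iff]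
  have union_not_acyclic {i j : ℕ} (hij : i < j) (hj : j ≤ c w) :
      ¬ (G.induce (c ⁻¹' {i} ∪ c ⁻¹' {j})).IsAcyclic := by
    obtain ⟨v, hvB, rfl⟩ := hff.exists_notMem_color_eq hB hw hj
    exact fun h => hff v hvB i hij <| isAcyclic_induce_of_subset
      (Set.insert_subset (Or.inr rfl) Set.subset_union_left) h
  refine ⟨fun j => ?_, fun i => ?_, fun i j hij => ?_⟩
  · obtain ⟨v, -, hv⟩ := hff.exists_notMem_color_eq hB hw (Nat.lt_succ_iff.mp j.isLt)
    exact ⟨v, Fin.ext hv⟩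
  · rw [class_eq]
    exact hc i
  · rw [class_eq, class_eq]
    obtain hlt | hlt := hij.lt_or_gt
    · exact union_not_acyclic hlt (Nat.lt_succ_iff.mp j.isLt)
    · rw [Set.union_comm]
      exact union_not_acyclic hlt (Nat.lt_succ_iff.mp i.isLt)

theorem IsCompleteArborealColoring.le_avertexArboricity [Finite V] {k : ℕ} {c : V → Fin k}
    (hc : IsCompleteArborealColoring G c) : k ≤ avertexArboricity G := by
  refine le_csSup ⟨Nat.card V, ?_⟩ ⟨c, hc⟩
  rintro m ⟨c', hc'⟩
  simpa using Nat.card_le_card_of_surjective c' hc'.1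

theorem exists_isForestColoring_extending [Finite V] (hB : G.IsIndepSet B)
    (f : B → Fin (avertexArboricity G)) :
    ∃ c : V → Fin (avertexArboricity G), IsForestColoring G c ∧ ∀ b : B, c b = f b := by
  obtain ⟨e, he⟩ := exists_injective_nat V
  let c₀ : V → ℕ := Function.extend Subtype.val (fun b : B => (f b : ℕ)) e
  have c₀_injOn : Set.InjOn c₀ Bᶜ := he.injOn.congr fun v hv =>
    (Function.extend_apply' _ _ _ fun ⟨b, hb⟩ => hv (hb ▸ b.2)).symm
  obtain ⟨c, hc, hcc₀, hff⟩ :=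
    (isForestColoring_of_injOn_compl hB c₀_injOn).exists_isFirstFitOff B
  have c_eq (b : B) : c b = f b :=
    (hcc₀ b.2).trans (Subtype.val_injective.extend_apply _ _ b)
  have c_lt (v : V) : c v < avertexArboricity G := by
    have : Nonempty V := ⟨v⟩
    obtain ⟨w, hw⟩ := Finite.exists_max c
    refine (hw v).trans_lt (lt_of_not_ge fun hle => ?_)
    have hwB : w ∉ B := fun h => (hle.trans_eq (c_eq ⟨w, h⟩)).not_gt (f ⟨w, h⟩).isLt
    have hcomplete := hff.isCompleteArborealColoring hc hB hwB fun u => Nat.lt_succ_of_le (hw u)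
    exact hle.not_gt hcomplete.le_avertexArboricity
  refine ⟨fun v => ⟨c v, c_lt v⟩, fun i => ?_, fun b => Fin.ext (c_eq b)⟩
  exact isAcyclic_induce_of_subset (fun v hv => congrArg Fin.val hv) (hc i)

theorem exists_isForestColoring [Finite V] (G : SimpleGraph V) :
    ∃ c : V → Fin (avertexArboricity G), IsForestColoring G c :=
  (exists_isForestColoring_extending (Set.pairwise_empty _) isEmptyElim).imp fun _ h => h.1

end FirstFit

section RandomColoring

variable {V α : Type*} [Fintype α] [DecidableEq α]

theorem card_fun_le_mul_card_filter_leftInverse [Fintype V] [DecidableEq V] (t : α ↪ V) :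
    Fintype.card (V → α) ≤
      Fintype.card α ^ Fintype.card α * #{f : V → α | ∀ i, f (t i) = i} := by
  let overwrite (f : V → α) : (α → α) × {f : V → α // ∀ i, f (t i) = i} :=
    (f ∘ t, ⟨Function.extend t id f, t.injective.extend_apply id f⟩)
  have overwrite_injective : Function.Injective overwrite := by
    intro f g hfg
    simp only [overwrite, Prod.mk.injEq, Subtype.mk.injEq] at hfg
    funext v
    by_cases hv : ∃ i, t i = v
    · obtain ⟨i, rfl⟩ := hv
      exact congrFun hfg.1 i
    · simpa only [Function.extend_apply' _ _ _ hv] using congrFun hfg.2 v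
  simpa only [Fintype.card_prod, Fintype.card_fun, Fintype.card_subtype] using
    Fintype.card_le_of_injective overwrite overwrite_injective

theorem exists_card_le_mul_card_filter_leftInverse {ι : Type*} [Finite V] [Nonempty α]
    (s : Finset ι) (t : ι → α ↪ V) :
    ∃ f : V → α, #s ≤ Fintype.card α ^ Fintype.card α * #{x ∈ s | ∀ i, f (t x i) = i} := by
  classical
  have := Fintype.ofFinite V
  suffices h : ∑ _f : V → α, #s ≤
      ∑ f : V → α, Fintype.card α ^ Fintype.card α * #{x ∈ s | ∀ i, f (t x i) = i} by
    obtain ⟨f, -, hf⟩ := exists_le_of_sum_le univ_nonempty h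
    exact ⟨f, hf⟩
  calc ∑ _f : V → α, #s = ∑ _x ∈ s, Fintype.card (V → α) := by
        simp only [sum_const, smul_eq_mul, card_univ, mul_comm]
    _ ≤ ∑ x ∈ s, Fintype.card α ^ Fintype.card α * #{f : V → α | ∀ i, f (t x i) = i} :=
        sum_le_sum fun x _ => card_fun_le_mul_card_filter_leftInverse (t x)
    _ = ∑ f : V → α, Fintype.card α ^ Fintype.card α * #{x ∈ s | ∀ i, f (t x i) = i} := by
        simp only [← mul_sum, card_filter]
        rw [sum_comm]

theorem exists_coloring_card_interedges_le [Finite V] [Nonempty α] (G : SimpleGraph V)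
    [DecidableRel G.Adj] (S B : Finset V) :
    ∃ f : V → α, ∀ c : V → α, Set.EqOn c f B →
      #(G.interedges S B) ≤ Fintype.card α *
        (Fintype.card α ^ Fintype.card α * #((monochromaticSubgraph G c).interedges S B) + #S) := by
  set k := Fintype.card α
  let N (a : V) : Finset V := {b ∈ B | G.Adj a b}
  have blocks_nonempty (a : V) : Nonempty (Fin (#(N a) / k) × α ↪ N a) :=
    Function.Embedding.nonempty_of_card_le (by simpa using Nat.div_mul_le_self _ _)
  let block (a : V) : Fin (#(N a) / k) × α ↪ V :=
    (blocks_nonempty a).some.trans (Function.Embedding.subtype _)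
  have block_mem (a : V) (x) : block a x ∈ B ∧ G.Adj a (block a x) :=
    mem_filter.mp ((blocks_nonempty a).some x).2
  obtain ⟨f, hf⟩ := exists_card_le_mul_card_filter_leftInverse
    (S.sigma fun a => (univ : Finset (Fin (#(N a) / k))))
    fun x => (Function.Embedding.sectR x.2 α).trans (block x.1)
  refine ⟨f, fun c hcf => ?_⟩
  calc #(G.interedges S B) = ∑ a ∈ S, #(N a) := card_interedges_eq_sum S B
    _ ≤ ∑ a ∈ S, k * (#(N a) / k + 1) :=
        sum_le_sum fun a _ => (Nat.lt_mul_div_succ _ Fintype.card_pos).le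
    _ = k * (#(S.sigma fun a => (univ : Finset (Fin (#(N a) / k)))) + #S) := by
        simp [← mul_sum, sum_add_distrib]
    _ ≤ k * (k ^ k * #((monochromaticSubgraph G c).interedges S B) + #S) := by
        gcongr
        exact hf.trans <| Nat.mul_le_mul_left _ <| card_filter_leftInverse_le_card_interedges block
          (fun a x => (block_mem a x).1) (fun a x => (block_mem a x).2) hcf

end RandomColoring

theorem card_interedges_le_mul_card {V : Type*} [Finite V] (G : SimpleGraph V) [DecidableRel G.Adj]
    {S B : Finset V} (hBS : B ⊆ S) (hB : G.IsIndepSet (B : Set V)) :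
    #(G.interedges S B) ≤
      avertexArboricity G * (avertexArboricity G ^ avertexArboricity G + 1) * #S := by
  obtain rfl | ⟨v, -⟩ := S.eq_empty_or_nonempty
  · simp
  obtain ⟨c₀, -⟩ := exists_isForestColoring G
  have : Nonempty (Fin (avertexArboricity G)) := ⟨c₀ v⟩
  obtain ⟨f, hf⟩ := exists_coloring_card_interedges_le (α := Fin (avertexArboricity G)) G S B
  obtain ⟨c, hc, hcf⟩ := exists_isForestColoring_extending hB fun b => f b
  have mono_indep : (monochromaticSubgraph G c).IsIndepSet (B : Set V) :=
    fun x hx y hy hxy h => hB hx hy hxy h.1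
  have mono_le : #((monochromaticSubgraph G c).interedges S B) ≤ #S :=
    card_interedges_le_card_of_isAcyclic hc.isAcyclic_monochromaticSubgraph hBS mono_indep
  have hfc := hf c fun b hb => hcf ⟨b, hb⟩
  rw [Fintype.card_fin] at hfc
  calc #(G.interedges S B) ≤ avertexArboricity G * (avertexArboricity G ^ avertexArboricity G *
          #((monochromaticSubgraph G c).interedges S B) + #S) := hfc
    _ ≤ avertexArboricity G * (avertexArboricity G ^ avertexArboricity G * #S + #S) := by gcongr
    _ = _ := by ring

theorem degeneracy_bounded_by_ava_general {V : Type*} [Finite V] (G : SimpleGraph V) {S : Set V}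
    (hS : S.Nonempty) :
    ∃ v ∈ S, {w | w ∈ S ∧ G.Adj v w}.ncard ≤ 2 * avertexArboricity G ^ 2 *
      (avertexArboricity G ^ avertexArboricity G + 1) := by
  classical
  lift S to Finset V using S.toFinite
  set k := avertexArboricity G
  obtain ⟨c, hc⟩ := exists_isForestColoring G
  obtain ⟨p⟩ := hc.colorable
  have class_indep (i : Fin (k * 2)) : G.IsIndepSet (({v ∈ S | p v = i} : Finset V) : Set V) :=
    (p.isIndepSet_colorClass i).mono fun v hv => (mem_filter.mp hv).2
  have degree_sum_le : ∑ v ∈ S, #{w ∈ S | G.Adj v w} ≤ ∑ _v ∈ S, 2 * k ^ 2 * (k ^ k + 1) :=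
    calc ∑ v ∈ S, #{w ∈ S | G.Adj v w} = ∑ i, #(G.interedges S {v ∈ S | p v = i}) := by
          rw [← card_interedges_eq_sum, card_interedges_self_eq_sum_coloring S p]
      _ ≤ ∑ _i : Fin (k * 2), k * (k ^ k + 1) * #S :=
          sum_le_sum fun i _ => card_interedges_le_mul_card G (filter_subset _ _) (class_indep i)
      _ = ∑ _v ∈ S, 2 * k ^ 2 * (k ^ k + 1) := by
          simp only [sum_const, card_univ, Fintype.card_fin, smul_eq_mul]
          ring
  obtain ⟨v, hv, hdeg⟩ := exists_le_of_sum_le (coe_nonempty.mp hS) degree_sum_le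
  refine ⟨v, hv, ?_⟩
  rwa [← Set.ncard_coe_finset, coe_filter] at hdeg

/-- there is a function `g : ℕ → ℕ` such that every finite simple graph `G`
has degeneracy at most `g(ava(G))`: every nonempty induced subgraph has a vertex of degree
at most `g(ava(G))`. -/
theorem degeneracy_bounded_by_ava :
    ∃ g : ℕ → ℕ, ∀ (V : Type) [Fintype V] (G : SimpleGraph V) (S : Set V),
      S.Nonempty → ∃ v ∈ S, {w | w ∈ S ∧ G.Adj v w}.ncard ≤ g (avertexArboricity G) :=
  ⟨fun a => 2 * a ^ 2 * (a ^ a + 1), fun _ _ G _ hS => degeneracy_bounded_by_ava_general G hS⟩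
end

section
/- There exists a function f : ℕ → ℕ such that for every finite simple graph G, the minimum size of a feedback vertex set of G is at most f(ava(G)), i.e. τ(G) ≤ f(ava(G)). -/
open Function

/-!
By the Erdős–Pósa theorem, a graph without many disjoint cycles has a small feedback vertex set. It
remains to see that many disjoint cycles force a large a-vertex arboricity. For this it suffices to
find `k ≥ 2` disjoint sets that induce forests and pairwise contain a cycle in their union: among
the arboreal colourings in which each of these sets is monochromatic, one that does not allow
merging two colours is complete, and the sets have distinct colours in it.

To find such sets, remove a vertex `v` from each of the disjoint (induced) cycles, leaving a tree
`P` to which `v` sends two edges. By Ramsey's theorem, the number of edges between two of the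
trees, two of the vertices, or a vertex and a tree of another cycle, may be assumed to be always at
least `2`, always `1` or always `0`. Unless it is always `0`, the sets are built from these trees
and vertices directly. If it is always `0`, there is one cycle for each pair of colours `i < j`,
whose tree gets the colour `i` and whose vertex gets the colour `j`.

The Erdős–Pósa theorem is proved with a subcubic subgraph `H` of `G` which maximises twice the
number of edges minus twice the number of vertices. If this number is large, `H` has a cycle whose
removal at most halves it, and so `H` has many disjoint cycles. Otherwise `H` has few vertices of
degree `3`, and by maximality each cycle of `G` avoiding them is contained in `H` or meets `H` in a
single vertex. These cycles of `H` are disjoint, and so are any cycles that meet `H` in different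
single vertices, so that a few more vertices meet all of them.
-/

namespace ArborealColoring

open Finset

section EdgeCount

variable {V : Type*} {G H : SimpleGraph V} {A A' B B' C : Finset V} {v w : V}

open Classical in
/-- The number of pairs `(a, b)` of adjacent vertices with `a ∈ A` and `b ∈ B`; an edge with both
ends in `A ∩ B` is counted twice. -/
noncomputable def edgeCount (G : SimpleGraph V) (A B : Finset V) : ℕ :=
  #(G.interedges A B)

lemma edgeCount_comm (G : SimpleGraph V) (A B : Finset V) : edgeCount G A B = edgeCount G B A := by
  classical
  have : Std.Symm G.Adj := ⟨fun _ _ ↦ SimpleGraph.Adj.symm⟩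
  exact Rel.card_interedges_comm A B

lemma edgeCount_eq_sum (G : SimpleGraph V) (A B : Finset V) :
    edgeCount G A B = ∑ a ∈ A, edgeCount G {a} B := by
  classical
  simp only [edgeCount, SimpleGraph.interedges_def, card_filter, sum_product, sum_singleton]

lemma edgeCount_mono (hA : A ⊆ A') (hB : B ⊆ B') : edgeCount G A B ≤ edgeCount G A' B' := by
  classical
  exact card_le_card (G.interedges_mono hA hB)

lemma edgeCount_mono_graph (h : H ≤ G) (A B : Finset V) : edgeCount H A B ≤ edgeCount G A B := by
  classical
  exact card_le_card (monotone_filter_right _ fun _ _ hadj ↦ h hadj)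

lemma edgeCount_congr (h : ∀ a ∈ A, ∀ b ∈ B, (H.Adj a b ↔ G.Adj a b)) :
    edgeCount H A B = edgeCount G A B := by
  classical
  refine congrArg card (filter_congr fun e he ↦ ?_)
  exact h _ (mem_product.1 he).1 _ (mem_product.1 he).2

lemma edgeCount_singleton_left [DecidablePred (G.Adj v)] (B : Finset V) :
    edgeCount G {v} B = #{b ∈ B | G.Adj v b} := by
  simp only [edgeCount, SimpleGraph.interedges_def, card_filter, sum_product, sum_singleton]
  exact sum_congr rfl fun _ _ ↦ by congr

variable [DecidableEq V]

lemma edgeCount_union_left (h : Disjoint A B) (C : Finset V) :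
    edgeCount G (A ∪ B) C = edgeCount G A C + edgeCount G B C := by
  rw [edgeCount_eq_sum, sum_union h, ← edgeCount_eq_sum, ← edgeCount_eq_sum]

lemma edgeCount_union_right (h : Disjoint A B) (C : Finset V) :
    edgeCount G C (A ∪ B) = edgeCount G C A + edgeCount G C B := by
  simp only [edgeCount_comm G C, edgeCount_union_left h]

lemma edgeCount_biUnion_left {ι : Type*} {s : Finset ι} {f : ι → Finset V}
    (h : (s : Set ι).PairwiseDisjoint f) (C : Finset V) :
    edgeCount G (s.biUnion f) C = ∑ i ∈ s, edgeCount G (f i) C := by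
  rw [edgeCount_eq_sum, sum_biUnion h]
  exact sum_congr rfl fun i _ ↦ (edgeCount_eq_sum G (f i) C).symm

lemma edgeCount_biUnion_right {ι : Type*} {s : Finset ι} {f : ι → Finset V}
    (h : (s : Set ι).PairwiseDisjoint f) (C : Finset V) :
    edgeCount G C (s.biUnion f) = ∑ i ∈ s, edgeCount G C (f i) := by
  simp only [edgeCount_comm G C, edgeCount_biUnion_left h]

lemma edgeCount_singleton_erase_self (G : SimpleGraph V) (v : V) (A : Finset V) :
    edgeCount G {v} (A.erase v) = edgeCount G {v} A := by
  classical
  rw [edgeCount_singleton_left, edgeCount_singleton_left, filter_erase, erase_eq_of_notMem]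
  simp

end EdgeCount

section Excess

variable {V : Type*} {G H : SimpleGraph V} {A B S : Finset V} {v : V}

/-- Twice the difference between the number of edges and the number of vertices of `G[A]`.
A forest has excess `-2` per component, so the sign of the excess detects cycles. -/
noncomputable def excess (G : SimpleGraph V) (A : Finset V) : ℤ :=
  edgeCount G A A - 2 * #A

lemma excess_eq_sum (G : SimpleGraph V) (A : Finset V) :
    excess G A = ∑ a ∈ A, ((edgeCount G {a} A : ℤ) - 2) := by
  rw [excess, edgeCount_eq_sum, sum_sub_distrib, sum_const, nsmul_eq_mul, Nat.cast_sum]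
  ring

lemma excess_mono_graph (h : H ≤ G) (A : Finset V) : excess H A ≤ excess G A := by
  have := edgeCount_mono_graph h A A
  unfold excess
  omega

@[simp]
lemma excess_singleton (G : SimpleGraph V) (v : V) : excess G {v} = -2 := by
  classical
  simp [excess, edgeCount_singleton_left]

lemma excess_nonneg_of_two_le_edgeCount (h : ∀ v ∈ A, 2 ≤ edgeCount G {v} A) :
    0 ≤ excess G A := by
  rw [excess_eq_sum]
  exact sum_nonneg fun v hv ↦ by have := h v hv; omega

lemma excess_union [DecidableEq V] (h : Disjoint A B) :
    excess G (A ∪ B) = excess G A + excess G B + 2 * edgeCount G A B := by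
  simp only [excess, edgeCount_union_left h, edgeCount_union_right h, card_union_of_disjoint h,
    edgeCount_comm G B A]
  push_cast
  ring

lemma excess_insert [DecidableEq V] (h : v ∉ A) :
    excess G (insert v A) = excess G A - 2 + 2 * edgeCount G {v} A := by
  rw [insert_eq, excess_union (disjoint_singleton_left.2 h), excess_singleton]
  ring

lemma excess_erase [DecidableEq V] (h : v ∈ A) :
    excess G (A.erase v) = excess G A + 2 - 2 * edgeCount G {v} A := by
  have := excess_insert (G := G) (notMem_erase v A)
  rw [insert_erase h, edgeCount_singleton_erase_self] at this
  linarith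

lemma even_excess (G : SimpleGraph V) (A : Finset V) : Even (excess G A) := by
  classical
  induction A using Finset.induction_on with
  | empty => simp [excess, edgeCount]
  | insert v A hv ih =>
    rw [excess_insert hv]
    exact (ih.sub even_two).add (even_two_mul _)

end Excess

section ContainsCycle

variable {V : Type*} {G H : SimpleGraph V} {A B C S T : Finset V} {v : V}

/-- The subgraph of `G` induced by `S` has a cycle. -/
def ContainsCycle (G : SimpleGraph V) (S : Finset V) : Prop :=
  ¬ (G.induce (S : Set V)).IsAcyclic

lemma excess_support_nonneg_of_isCycle [DecidableEq V] {c : G.Walk v v} (hc : c.IsCycle) :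
    0 ≤ excess G c.support.toFinset := by
  classical
  refine excess_nonneg_of_two_le_edgeCount fun x hx ↦ ?_
  rw [edgeCount_singleton_left, ← Set.ncard_coe_finset,
    ← hc.ncard_neighborSet_toSubgraph_eq_two (List.mem_toFinset.1 hx)]
  refine Set.ncard_le_ncard (fun y (hy : c.toSubgraph.Adj x y) ↦ ?_) (finite_toSet _)
  simpa [hy.adj_sub] using (SimpleGraph.Walk.mem_verts_toSubgraph c).1 hy.snd_mem

lemma exists_edgeCount_le_one (hS : ¬ ContainsCycle G S) (hne : S.Nonempty) :
    ∃ v ∈ S, edgeCount G {v} S ≤ 1 := by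
  classical
  have hacyclic : (G.induce (S : Set V)).IsAcyclic := not_not.1 hS
  have : Nonempty (S : Set V) := hne.to_subtype
  obtain ⟨u, w, p, hp, hmax⟩ :=
    SimpleGraph.Walk.exists_isPath_forall_isPath_length_le_length (G.induce (S : Set V))
  refine ⟨u, u.2, ?_⟩
  -- A neighbour of `u` off the longest path `p` would extend it, so all neighbours equal `p.snd`.
  have eq_snd (y : (S : Set V)) (hy : G.Adj u y) : y = p.snd := by
    refine hacyclic.eq_snd_of_adj_start hp hy (by_contra fun hyp ↦ ?_)
    have := hmax _ _ (.cons (SimpleGraph.Adj.symm hy) p) (hp.cons hyp)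
    simp at this
  rw [edgeCount_singleton_left, card_le_one]
  intro a ha b hb
  rw [mem_filter] at ha hb
  exact congrArg Subtype.val
    ((eq_snd ⟨a, ha.1⟩ ha.2).trans (eq_snd ⟨b, hb.1⟩ hb.2).symm)

lemma isAcyclic_induce_mono {s t : Set V} (ht : (G.induce t).IsAcyclic) (hst : s ⊆ t) :
    (G.induce s).IsAcyclic :=
  ht.embedding (SimpleGraph.induceHomOfLE G hst)

lemma ContainsCycle.mono (h : ContainsCycle G S) (hST : S ⊆ T) : ContainsCycle G T :=
  fun hT ↦ h (isAcyclic_induce_mono hT (coe_subset.2 hST))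

lemma ContainsCycle.mono_graph (h : ContainsCycle H S) (hHG : H ≤ G) : ContainsCycle G S :=
  fun hS ↦ h (hS.anti (SimpleGraph.comap_monotone _ hHG))

lemma excess_neg_of_not_containsCycle (hS : ¬ ContainsCycle G S) (hne : S.Nonempty) :
    excess G S < 0 := by
  classical
  induction S using Finset.strongInduction with
  | H S ih =>
    obtain ⟨v, hv, hdeg⟩ := exists_edgeCount_le_one hS hne
    obtain hempty | hne' := (S.erase v).eq_empty_or_nonempty
    · rw [← insert_erase hv, hempty, insert_empty, excess_singleton]
      norm_num
    · have := ih _ (erase_ssubset hv) (mt (·.mono (erase_subset v S)) hS) hne'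
      rw [excess_erase hv] at this
      omega

lemma containsCycle_iff_exists_isCycle :
    ContainsCycle G S ↔ ∃ v, ∃ c : G.Walk v v, c.IsCycle ∧ ∀ x ∈ c.support, x ∈ S := by
  refine ⟨fun h ↦ ?_, fun ⟨v, c, hc, hcS⟩ hS ↦ hS (c.induce _ hcS) ?_⟩
  · simp only [ContainsCycle, SimpleGraph.IsAcyclic, not_forall, not_not] at h
    obtain ⟨v, c, hc⟩ := h
    refine ⟨_, c.map (SimpleGraph.Embedding.induce _).toHom, hc.map Subtype.val_injective, ?_⟩
    simp only [SimpleGraph.Walk.support_map, List.mem_map]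
    rintro _ ⟨y, -, rfl⟩
    exact y.2
  · exact SimpleGraph.Walk.IsCycle.of_map (f := (SimpleGraph.Embedding.induce _).toHom)
      (by rwa [SimpleGraph.Walk.map_induce])

theorem containsCycle_iff_excess_nonneg :
    ContainsCycle G S ↔ ∃ B ⊆ S, B.Nonempty ∧ 0 ≤ excess G B := by
  classical
  refine ⟨fun h ↦ ?_, fun ⟨B, hBS, hne, hB⟩ ↦ ?_⟩
  · obtain ⟨v, c, hc, hcS⟩ := containsCycle_iff_exists_isCycle.1 h
    exact ⟨c.support.toFinset, fun x hx ↦ hcS x (List.mem_toFinset.1 hx),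
      ⟨v, List.mem_toFinset.2 c.start_mem_support⟩, excess_support_nonneg_of_isCycle hc⟩
  · by_contra hS
    have := excess_neg_of_not_containsCycle (mt (·.mono hBS) hS) hne
    omega

lemma excess_le_neg_two_of_subset (hS : ¬ ContainsCycle G S) (hBS : B ⊆ S) (hne : B.Nonempty) :
    excess G B ≤ -2 := by
  have := excess_neg_of_not_containsCycle (mt (·.mono hBS) hS) hne
  have := even_excess G B
  rw [Int.even_iff] at this
  omega

lemma ContainsCycle.exists_minimal_subset (h : ContainsCycle G S) :
    ∃ C ⊆ S, Minimal (ContainsCycle G) C :=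
  exists_minimal_le_of_wellFoundedLT (ContainsCycle G) S h

lemma nonempty_and_excess_nonneg_of_minimal (hC : Minimal (ContainsCycle G) C) :
    C.Nonempty ∧ 0 ≤ excess G C := by
  obtain ⟨B, hBC, hne, hB⟩ := containsCycle_iff_excess_nonneg.1 hC.prop
  obtain rfl := hC.eq_of_le (containsCycle_iff_excess_nonneg.2 ⟨B, Subset.rfl, hne, hB⟩) hBC
  exact ⟨hne, hB⟩

lemma excess_add_four_le_of_minimal (hC : Minimal (ContainsCycle G) C) (hv : v ∈ C) :
    excess G C + 4 ≤ 2 * edgeCount G {v} C := by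
  classical
  obtain hempty | hne := (C.erase v).eq_empty_or_nonempty
  · have := (nonempty_and_excess_nonneg_of_minimal hC).2
    rw [← insert_erase hv, hempty, insert_empty, excess_singleton] at this
    omega
  · have := excess_le_neg_two_of_subset (hC.not_prop_of_lt (erase_ssubset hv)) Subset.rfl hne
    rw [excess_erase hv] at this
    omega

lemma edgeCount_eq_two_of_minimal (hC : Minimal (ContainsCycle G) C) (hv : v ∈ C) :
    edgeCount G {v} C = 2 := by
  classical
  obtain ⟨hne, hnonneg⟩ := nonempty_and_excess_nonneg_of_minimal hC
  have two_le (x : V) (hx : x ∈ C) : 2 ≤ edgeCount G {x} C := by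
    have := excess_add_four_le_of_minimal hC hx
    omega
  obtain ⟨u, hu, hmin⟩ := exists_min_image C (fun x ↦ edgeCount G {x} C) hne
  -- With minimum degree `d` we get `#C * (d - 2) ≤ excess G C ≤ 2 * (d - 2)`, where `d < #C`.
  have card_mul_le : (#C : ℤ) * (edgeCount G {u} C - 2) ≤ excess G C := by
    rw [excess_eq_sum, ← nsmul_eq_mul]
    exact card_nsmul_le_sum _ _ _ fun x hx ↦ by have := hmin x hx; omega
  have deg_lt_card : edgeCount G {u} C < #C := by
    rw [← edgeCount_singleton_erase_self, edgeCount_singleton_left]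
    exact (card_filter_le _ _).trans_lt (card_erase_lt_of_mem hu)
  have hzero : excess G C = 0 := by
    have := excess_add_four_le_of_minimal hC hu
    have := two_le u hu
    nlinarith
  have hv0 := (sum_eq_zero_iff_of_nonneg fun x hx ↦ by have := two_le x hx; omega).1
    (excess_eq_sum G C ▸ hzero) v hv
  omega

lemma excess_eq_zero_of_minimal (hC : Minimal (ContainsCycle G) C) : excess G C = 0 := by
  rw [excess_eq_sum]
  exact sum_eq_zero fun v hv ↦ by rw [edgeCount_eq_two_of_minimal hC hv]; norm_num

lemma not_containsCycle_union [DecidableEq V] (hA : ¬ ContainsCycle G A)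
    (hB : ¬ ContainsCycle G B) (hdisj : Disjoint A B) (hAB : edgeCount G A B ≤ 1) :
    ¬ ContainsCycle G (A ∪ B) := by
  rw [containsCycle_iff_excess_nonneg]
  rintro ⟨D, hD, hne, hexcess⟩
  obtain hDA | hDA := (D ∩ A).eq_empty_or_nonempty
  · have hDB : D ⊆ B := fun x hx ↦ (mem_union.1 (hD hx)).resolve_left fun hxA ↦
      notMem_empty x (hDA ▸ mem_inter.2 ⟨hx, hxA⟩)
    linarith [excess_le_neg_two_of_subset hB hDB hne]
  obtain hDB | hDB := (D ∩ B).eq_empty_or_nonempty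
  · have hDA : D ⊆ A := fun x hx ↦ (mem_union.1 (hD hx)).resolve_right fun hxB ↦
      notMem_empty x (hDB ▸ mem_inter.2 ⟨hx, hxB⟩)
    linarith [excess_le_neg_two_of_subset hA hDA hne]
  have hsplit : D ∩ A ∪ D ∩ B = D := by rw [← inter_union_distrib_left, inter_eq_left.2 hD]
  rw [← hsplit, excess_union (hdisj.mono inter_subset_right inter_subset_right)] at hexcess
  have := excess_le_neg_two_of_subset hA inter_subset_right hDA
  have := excess_le_neg_two_of_subset hB inter_subset_right hDB
  have := edgeCount_mono (G := G) (inter_subset_right (s₁ := D) (s₂ := A))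
    (inter_subset_right (s₁ := D) (s₂ := B))
  omega

lemma not_containsCycle_empty (G : SimpleGraph V) : ¬ ContainsCycle G ∅ := by
  rw [containsCycle_iff_excess_nonneg]
  rintro ⟨B, hB, hne, -⟩
  exact hne.ne_empty (subset_empty.1 hB)

lemma not_containsCycle_biUnion [DecidableEq V] {ι : Type*} {s : Finset ι} {f : ι → Finset V}
    (hf : ∀ i ∈ s, ¬ ContainsCycle G (f i)) (hdisj : (s : Set ι).PairwiseDisjoint f)
    (hedge : (s : Set ι).Pairwise fun i j ↦ edgeCount G (f i) (f j) = 0) :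
    ¬ ContainsCycle G (s.biUnion f) := by
  classical
  induction s using Finset.induction_on with
  | empty => exact not_containsCycle_empty G
  | insert i s hi ih =>
    have hne (j : ι) (hj : j ∈ s) : i ≠ j := fun h ↦ hi (h ▸ hj)
    have hsub : (s : Set ι) ⊆ (insert i s : Finset ι) := coe_subset.2 (subset_insert i s)
    have hi' : i ∈ (insert i s : Finset ι) := mem_insert_self i s
    rw [biUnion_insert]
    refine not_containsCycle_union (hf i hi')
      (ih (fun j hj ↦ hf j (mem_insert_of_mem hj)) (hdisj.subset hsub) (hedge.mono hsub)) ?_ ?_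
    · exact (disjoint_biUnion_right _ _ _).2 fun j hj ↦ hdisj hi' (hsub hj) (hne j hj)
    · rw [edgeCount_biUnion_right (hdisj.subset hsub),
        sum_eq_zero fun j hj ↦ hedge hi' (hsub hj) (hne j hj)]
      exact zero_le_one

end ContainsCycle

section InducesTree

variable {V : Type*} {G : SimpleGraph V} {P Q : Finset V}

/-- `P` induces a tree in `G`: it induces a forest, and the excess `-2` says that this forest has
exactly one component. -/
structure InducesTree (G : SimpleGraph V) (P : Finset V) : Prop where
  not_containsCycle : ¬ ContainsCycle G P
  excess_eq : excess G P = -2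

namespace InducesTree

lemma nonempty (hP : InducesTree G P) : P.Nonempty := by
  rw [nonempty_iff_ne_empty]
  rintro rfl
  simpa [excess, edgeCount] using hP.excess_eq

lemma singleton (G : SimpleGraph V) (v : V) : InducesTree G {v} := by
  refine ⟨?_, excess_singleton G v⟩
  rw [containsCycle_iff_excess_nonneg]
  rintro ⟨B, hB, hne, h⟩
  rw [hne.subset_singleton_iff.1 hB, excess_singleton] at h
  omega

variable [DecidableEq V]

lemma union (hP : InducesTree G P) (hQ : InducesTree G Q) (hdisj : Disjoint P Q)
    (hPQ : edgeCount G P Q = 1) : InducesTree G (P ∪ Q) where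
  not_containsCycle :=
    not_containsCycle_union hP.not_containsCycle hQ.not_containsCycle hdisj hPQ.le
  excess_eq := by rw [excess_union hdisj, hP.excess_eq, hQ.excess_eq, hPQ]; norm_num

lemma containsCycle_union (hP : InducesTree G P) (hQ : InducesTree G Q) (hdisj : Disjoint P Q)
    (hPQ : 2 ≤ edgeCount G P Q) : ContainsCycle G (P ∪ Q) := by
  refine containsCycle_iff_excess_nonneg.2
    ⟨P ∪ Q, Subset.rfl, hP.nonempty.mono subset_union_left, ?_⟩
  rw [excess_union hdisj, hP.excess_eq, hQ.excess_eq]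
  omega

end InducesTree

end InducesTree

section Weight

variable {V : Type*} {H : SimpleGraph V} {A B C : Finset V}

/-- The excess of `A` split among its vertices: a vertex of degree `d` in `H[A]` weighs `d - 2`, and
`weight H A B` is the total weight of the vertices of `B`. -/
noncomputable def weight (H : SimpleGraph V) (A B : Finset V) : ℤ :=
  edgeCount H B A - 2 * #B

lemma weight_eq_sum (H : SimpleGraph V) (A B : Finset V) :
    weight H A B = ∑ b ∈ B, ((edgeCount H {b} A : ℤ) - 2) := by
  rw [weight, edgeCount_eq_sum, sum_sub_distrib, sum_const, nsmul_eq_mul, Nat.cast_sum]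
  ring

lemma weight_self (H : SimpleGraph V) (A : Finset V) : weight H A A = excess H A := rfl

lemma weight_nonneg (hdeg : ∀ a ∈ A, 2 ≤ edgeCount H {a} A) (hBA : B ⊆ A) :
    0 ≤ weight H A B := by
  rw [weight_eq_sum]
  exact sum_nonneg fun b hb ↦ by have := hdeg b (hBA hb); omega

variable [DecidableEq V]

lemma weight_union (h : Disjoint B C) : weight H A (B ∪ C) = weight H A B + weight H A C := by
  rw [weight_eq_sum, weight_eq_sum, weight_eq_sum, sum_union h]

lemma excess_sdiff_add_weight_le (hBA : B ⊆ A) (hB : 0 ≤ excess H B) :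
    excess H A ≤ excess H (A \ B) + 2 * weight H A B := by
  have hdisj : Disjoint B (A \ B) := disjoint_sdiff
  have hsplit := excess_union (G := H) hdisj
  have hedges := edgeCount_union_right (G := H) hdisj B
  rw [union_sdiff_of_subset hBA] at hsplit hedges
  unfold excess weight at *
  omega

end Weight

section LightTreePartition

variable {V : Type*} {H : SimpleGraph V} {A : Finset V}

/-- Every cycle of `H[A]` carries more than a quarter of the excess of `A`. -/
def NoLightCycle (H : SimpleGraph V) (A : Finset V) : Prop :=
  ∀ B ⊆ A, B.Nonempty → 4 * weight H A B ≤ excess H A → excess H B ≤ -2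

section

variable [DecidableEq V]

/-- A partition of `A` into pieces of excess `-2`, each carrying at most a sixteenth of the excess
of `A`. -/
structure IsLightTreePartition (H : SimpleGraph V) (A : Finset V) (𝒯 : Finset (Finset V)) :
    Prop where
  pairwiseDisjoint : (𝒯 : Set (Finset V)).PairwiseDisjoint id
  biUnion_eq : 𝒯.biUnion id = A
  excess_eq : ∀ P ∈ 𝒯, excess H P = -2
  weight_le : ∀ P ∈ 𝒯, 16 * weight H A P ≤ excess H A

/-- The parts carrying more than a 32nd of the excess of `A`. -/
noncomputable def heavyParts (H : SimpleGraph V) (A : Finset V) (𝒯 : Finset (Finset V)) :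
    Finset (Finset V) :=
  {P ∈ 𝒯 | excess H A < 32 * weight H A P}

lemma isLightTreePartition_singletons (hdeg : ∀ a ∈ A, edgeCount H {a} A ≤ 3)
    (hexcess : 16 ≤ excess H A) : IsLightTreePartition H A (A.image fun a ↦ {a}) where
  pairwiseDisjoint := by
    simp only [coe_image]
    rintro _ ⟨a, -, rfl⟩ _ ⟨b, -, rfl⟩ hab
    exact disjoint_singleton.2 fun h ↦ hab (h ▸ rfl)
  biUnion_eq := by ext; simp
  excess_eq := by simp
  weight_le := by
    simp only [forall_mem_image, weight_eq_sum, sum_singleton]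
    intro a ha
    have := hdeg a ha
    omega

namespace IsLightTreePartition

variable {𝒯 : Finset (Finset V)} {P P' Q R : Finset V}

lemma subset (h𝒯 : IsLightTreePartition H A 𝒯) (hP : P ∈ 𝒯) : P ⊆ A :=
  h𝒯.biUnion_eq ▸ subset_biUnion_of_mem id hP

lemma nonempty (h𝒯 : IsLightTreePartition H A 𝒯) (hP : P ∈ 𝒯) : P.Nonempty := by
  rw [nonempty_iff_ne_empty]
  rintro rfl
  simpa [excess, edgeCount] using h𝒯.excess_eq ∅ hP

lemma disjoint (h𝒯 : IsLightTreePartition H A 𝒯) (hP : P ∈ 𝒯) (hQ : Q ∈ 𝒯) (hPQ : P ≠ Q) :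
    Disjoint P Q :=
  h𝒯.pairwiseDisjoint hP hQ hPQ

lemma edgeCount_le_one (h𝒯 : IsLightTreePartition H A 𝒯) (hlight : NoLightCycle H A)
    (hexcess : 0 < excess H A) (hP : P ∈ 𝒯) (hQ : Q ∈ 𝒯) (hPQ : P ≠ Q) :
    edgeCount H P Q ≤ 1 := by
  have hdisj := h𝒯.disjoint hP hQ hPQ
  have hwP := h𝒯.weight_le P hP
  have hwQ := h𝒯.weight_le Q hQ
  have := hlight (P ∪ Q) (union_subset (h𝒯.subset hP) (h𝒯.subset hQ))
    ((h𝒯.nonempty hP).mono subset_union_left) (by rw [weight_union hdisj]; linarith)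
  rw [excess_union hdisj, h𝒯.excess_eq P hP, h𝒯.excess_eq Q hQ] at this
  omega

lemma merge (h𝒯 : IsLightTreePartition H A 𝒯) (hP : P ∈ 𝒯) (hQ : Q ∈ 𝒯) (hPQ : P ≠ Q)
    (hedge : edgeCount H P Q = 1) (hweight : 16 * (weight H A P + weight H A Q) ≤ excess H A) :
    IsLightTreePartition H A (insert (P ∪ Q) ((𝒯.erase P).erase Q)) := by
  have hdisj := h𝒯.disjoint hP hQ hPQ
  have mem_rest {R : Finset V} (hR : R ∈ (𝒯.erase P).erase Q) : R ≠ P ∧ R ≠ Q ∧ R ∈ 𝒯 := by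
    simp only [mem_erase] at hR
    exact ⟨hR.2.1, hR.1, hR.2.2⟩
  refine ⟨?_, ?_, ?_, ?_⟩
  · rw [coe_insert]
    refine (h𝒯.pairwiseDisjoint.subset fun R hR ↦ (mem_rest hR).2.2).insert fun R hR _ ↦ ?_
    obtain ⟨hRP, hRQ, hR⟩ := mem_rest hR
    exact disjoint_union_left.2 ⟨h𝒯.disjoint hP hR hRP.symm, h𝒯.disjoint hQ hR hRQ.symm⟩
  · rw [← h𝒯.biUnion_eq, biUnion_insert, id, union_assoc]
    conv_rhs => rw [← insert_erase hP, biUnion_insert,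
      ← insert_erase (mem_erase.2 ⟨hPQ.symm, hQ⟩), biUnion_insert, id, id]
  · refine (forall_mem_insert _ _ _).2 ⟨?_, fun R hR ↦ h𝒯.excess_eq R (mem_rest hR).2.2⟩
    rw [excess_union hdisj, h𝒯.excess_eq P hP, h𝒯.excess_eq Q hQ, hedge]
    norm_num
  · refine (forall_mem_insert _ _ _).2 ⟨?_, fun R hR ↦ h𝒯.weight_le R (mem_rest hR).2.2⟩
    rwa [weight_union hdisj]

lemma excess_lt_of_adjacent (h𝒯 : MinimalFor (IsLightTreePartition H A) card 𝒯)
    (hP : P ∈ 𝒯) (hQ : Q ∈ 𝒯) (hPQ : P ≠ Q) (hedge : edgeCount H P Q = 1) :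
    excess H A < 16 * (weight H A P + weight H A Q) := by
  by_contra! hle
  have hcard := h𝒯.not_prop_of_lt (j := insert (P ∪ Q) ((𝒯.erase P).erase Q)) ?_
  · exact hcard (h𝒯.prop.merge hP hQ hPQ hedge hle)
  · have hQ' : Q ∈ 𝒯.erase P := mem_erase.2 ⟨hPQ.symm, hQ⟩
    have := card_insert_le (P ∪ Q) ((𝒯.erase P).erase Q)
    have := card_erase_add_one hP
    have := card_erase_add_one hQ'
    omega

lemma sum_edgeCount_erase (h𝒯 : IsLightTreePartition H A 𝒯) (hP : P ∈ 𝒯) :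
    ∑ Q ∈ 𝒯.erase P, (edgeCount H P Q : ℤ) = weight H A P + 2 := by
  have htotal : edgeCount H P A = ∑ Q ∈ 𝒯, edgeCount H P Q := by
    conv_lhs => rw [← h𝒯.biUnion_eq, edgeCount_biUnion_right h𝒯.pairwiseDisjoint]
    rfl
  rw [← add_sum_erase 𝒯 _ hP] at htotal
  have := h𝒯.excess_eq P hP
  rw [weight, htotal]
  unfold excess at this
  push_cast
  linarith

lemma sum_weight (h𝒯 : IsLightTreePartition H A 𝒯) : ∑ P ∈ 𝒯, weight H A P = excess H A := by
  rw [← weight_self, weight_eq_sum]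
  conv_rhs => rw [← h𝒯.biUnion_eq, sum_biUnion h𝒯.pairwiseDisjoint, h𝒯.biUnion_eq]
  simp only [weight_eq_sum, id]

lemma card_heavyParts_le (h𝒯 : IsLightTreePartition H A 𝒯)
    (hdeg : ∀ a ∈ A, 2 ≤ edgeCount H {a} A) (hexcess : 0 < excess H A) :
    #(heavyParts H A 𝒯) ≤ 32 := by
  have : (#(heavyParts H A 𝒯) : ℤ) * excess H A ≤ 32 * excess H A :=
    calc (#(heavyParts H A 𝒯) : ℤ) * excess H A
        ≤ ∑ P ∈ heavyParts H A 𝒯, 32 * weight H A P := by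
          rw [← nsmul_eq_mul]
          exact card_nsmul_le_sum _ _ _ fun P hP ↦ (mem_filter.1 hP).2.le
      _ ≤ ∑ P ∈ 𝒯, 32 * weight H A P :=
          sum_le_sum_of_subset_of_nonneg (filter_subset _ _) fun P hP _ ↦ by
            linarith [weight_nonneg hdeg (h𝒯.subset hP)]
      _ = 32 * excess H A := by rw [← mul_sum, h𝒯.sum_weight]
  exact_mod_cast le_of_mul_le_mul_right this hexcess

lemma exists_two_heavy_neighbours (hdeg : ∀ a ∈ A, 2 ≤ edgeCount H {a} A)
    (h𝒯 : MinimalFor (IsLightTreePartition H A) card 𝒯)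
    (hlight : NoLightCycle H A) (hexcess : 0 < excess H A) (hP : P ∈ 𝒯)
    (hPlight : P ∉ heavyParts H A 𝒯) :
    ∃ Q ∈ heavyParts H A 𝒯, ∃ R ∈ heavyParts H A 𝒯, Q ≠ R ∧
      edgeCount H P Q = 1 ∧ edgeCount H P R = 1 := by
  have hedge (Q : Finset V) (hQ : Q ∈ 𝒯.erase P) : edgeCount H P Q ≤ 1 :=
    h𝒯.prop.edgeCount_le_one hlight hexcess hP (mem_of_mem_erase hQ) (ne_of_mem_erase hQ).symm
  have hcard : 1 < #{Q ∈ 𝒯.erase P | edgeCount H P Q = 1} := by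
    have hsum : ∑ Q ∈ 𝒯.erase P, (edgeCount H P Q : ℤ) ≤
        #{Q ∈ 𝒯.erase P | edgeCount H P Q = 1} := by
      rw [card_filter]
      push_cast
      refine sum_le_sum fun Q hQ ↦ ?_
      have := hedge Q hQ
      split_ifs <;> omega
    have := weight_nonneg hdeg (h𝒯.prop.subset hP)
    rw [h𝒯.prop.sum_edgeCount_erase hP] at hsum
    omega
  have heavy (Q : Finset V) (hQ : Q ∈ {Q ∈ 𝒯.erase P | edgeCount H P Q = 1}) :
      Q ∈ heavyParts H A 𝒯 ∧ edgeCount H P Q = 1 := by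
    simp only [mem_filter, mem_erase] at hQ
    obtain ⟨⟨hQP, hQ⟩, hPQ⟩ := hQ
    have := excess_lt_of_adjacent h𝒯 hP hQ hQP.symm hPQ
    have : 32 * weight H A P ≤ excess H A := not_lt.1 fun h ↦ hPlight (mem_filter.2 ⟨hP, h⟩)
    exact ⟨mem_filter.2 ⟨hQ, by linarith⟩, hPQ⟩
  obtain ⟨Q, hQ, R, hR, hQR⟩ := one_lt_card.1 hcard
  exact ⟨Q, (heavy Q hQ).1, R, (heavy R hR).1, hQR, (heavy Q hQ).2, (heavy R hR).2⟩

-- `P - Q - P' - R - P` closes up to a cycle through four parts, which is light.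
lemma eq_of_common_neighbours (h𝒯 : IsLightTreePartition H A 𝒯) (hlight : NoLightCycle H A)
    (hP : P ∈ 𝒯 \ heavyParts H A 𝒯) (hP' : P' ∈ 𝒯 \ heavyParts H A 𝒯)
    (hQ : Q ∈ heavyParts H A 𝒯) (hR : R ∈ heavyParts H A 𝒯) (hQR : Q ≠ R)
    (hPQ : edgeCount H P Q = 1) (hPR : edgeCount H P R = 1) (hP'Q : edgeCount H P' Q = 1)
    (hP'R : edgeCount H P' R = 1) : P = P' := by
  by_contra hPP'
  rw [mem_sdiff] at hP hP'
  have hQ𝒯 : Q ∈ 𝒯 := (mem_filter.1 hQ).1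
  have hR𝒯 : R ∈ 𝒯 := (mem_filter.1 hR).1
  have disj_light : Disjoint P P' := h𝒯.disjoint hP.1 hP'.1 hPP'
  have disj_heavy : Disjoint Q R := h𝒯.disjoint hQ𝒯 hR𝒯 hQR
  have disj : Disjoint (P ∪ P') (Q ∪ R) := by
    simp only [disjoint_union_left, disjoint_union_right]
    exact ⟨⟨h𝒯.disjoint hP.1 hQ𝒯 fun h ↦ hP.2 (h ▸ hQ),
      h𝒯.disjoint hP'.1 hQ𝒯 fun h ↦ hP'.2 (h ▸ hQ)⟩,
      h𝒯.disjoint hP.1 hR𝒯 fun h ↦ hP.2 (h ▸ hR),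
      h𝒯.disjoint hP'.1 hR𝒯 fun h ↦ hP'.2 (h ▸ hR)⟩
  have hexcess := hlight (P ∪ P' ∪ (Q ∪ R))
    (union_subset (union_subset (h𝒯.subset hP.1) (h𝒯.subset hP'.1))
      (union_subset (h𝒯.subset hQ𝒯) (h𝒯.subset hR𝒯)))
    ((h𝒯.nonempty hP.1).mono (subset_union_left.trans subset_union_left)) (by
      rw [weight_union disj, weight_union disj_light, weight_union disj_heavy]
      linarith [h𝒯.weight_le P hP.1, h𝒯.weight_le P' hP'.1, h𝒯.weight_le Q hQ𝒯,
        h𝒯.weight_le R hR𝒯])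
  rw [excess_union disj, excess_union disj_light, excess_union disj_heavy,
    edgeCount_union_left disj_light, edgeCount_union_right disj_heavy,
    edgeCount_union_right disj_heavy, h𝒯.excess_eq P hP.1, h𝒯.excess_eq P' hP'.1,
    h𝒯.excess_eq Q hQ𝒯, h𝒯.excess_eq R hR𝒯] at hexcess
  omega

lemma card_le (hdeg : ∀ a ∈ A, 2 ≤ edgeCount H {a} A)
    (h𝒯 : MinimalFor (IsLightTreePartition H A) card 𝒯) (hlight : NoLightCycle H A)
    (hexcess : 0 < excess H A) : #𝒯 ≤ 1056 := by
  have hlightCard : #(𝒯 \ heavyParts H A 𝒯) ≤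
      #(heavyParts H A 𝒯) * #(heavyParts H A 𝒯) := by
    have hneighbours (P : Finset V) (hP : P ∈ 𝒯 \ heavyParts H A 𝒯) :=
      exists_two_heavy_neighbours hdeg h𝒯 hlight hexcess (mem_sdiff.1 hP).1 (mem_sdiff.1 hP).2
    choose! Q hQ R hR hQR hPQ hPR using hneighbours
    rw [← card_product]
    refine card_le_card_of_injOn (fun P ↦ (Q P, R P))
      (fun P hP ↦ mem_product.2 ⟨hQ P hP, hR P hP⟩) fun P hP P' hP' heq ↦ ?_
    rw [Prod.mk.injEq] at heq
    exact h𝒯.prop.eq_of_common_neighbours hlight hP hP' (hQ P hP) (hR P hP) (hQR P hP)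
      (hPQ P hP) (hPR P hP) (heq.1 ▸ hPQ P' hP') (heq.2 ▸ hPR P' hP')
  have hheavy := h𝒯.prop.card_heavyParts_le hdeg hexcess
  calc #𝒯 = #(𝒯 \ heavyParts H A 𝒯) + #(heavyParts H A 𝒯) :=
        (card_sdiff_add_card_eq_card (filter_subset _ _)).symm
    _ ≤ 32 * 32 + 32 := by gcongr; exact hlightCard.trans (Nat.mul_le_mul hheavy hheavy)

lemma excess_le_card_sq (h𝒯 : IsLightTreePartition H A 𝒯) (hlight : NoLightCycle H A)
    (hexcess : 0 < excess H A) : excess H A ≤ (#𝒯 : ℤ) ^ 2 :=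
  calc excess H A = ∑ P ∈ 𝒯, weight H A P := h𝒯.sum_weight.symm
    _ ≤ ∑ P ∈ 𝒯, ∑ Q ∈ 𝒯.erase P, (edgeCount H P Q : ℤ) :=
        sum_le_sum fun _ hP ↦ by rw [h𝒯.sum_edgeCount_erase hP]; omega
    _ ≤ ∑ P ∈ 𝒯, ∑ Q ∈ 𝒯.erase P, 1 := sum_le_sum fun _ hP ↦ sum_le_sum fun _ hQ ↦ by
        exact_mod_cast h𝒯.edgeCount_le_one hlight hexcess hP (mem_of_mem_erase hQ)
          (ne_of_mem_erase hQ).symm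
    _ ≤ ∑ _P ∈ 𝒯, (#𝒯 : ℤ) := sum_le_sum fun P _ ↦ by
        simpa using card_le_card (erase_subset P 𝒯)
    _ = (#𝒯 : ℤ) ^ 2 := by rw [sum_const, nsmul_eq_mul, sq]

end IsLightTreePartition

end

lemma exists_light_excess_nonneg (hdeg : ∀ a ∈ A, 2 ≤ edgeCount H {a} A)
    (hdeg' : ∀ a ∈ A, edgeCount H {a} A ≤ 3) (hexcess : 1200000 < excess H A) :
    ∃ B ⊆ A, B.Nonempty ∧ 0 ≤ excess H B ∧ 4 * weight H A B ≤ excess H A := by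
  classical
  by_contra! hcon
  have hlight : NoLightCycle H A := fun B hBA hne hweight ↦ by
    have hneg : excess H B < 0 := not_le.1 fun h ↦ (hcon B hBA hne h).not_ge hweight
    have := Int.even_iff.1 (even_excess H B)
    omega
  obtain ⟨𝒯, h𝒯⟩ := exists_minimalFor_of_wellFoundedLT (IsLightTreePartition H A) card
    ⟨_, isLightTreePartition_singletons hdeg' (by linarith)⟩
  have hcard : (#𝒯 : ℤ) ≤ 1056 := by
    exact_mod_cast IsLightTreePartition.card_le hdeg h𝒯 hlight (by linarith)
  have := h𝒯.prop.excess_le_card_sq hlight (by linarith)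
  nlinarith

end LightTreePartition

section CyclePacking

variable {V : Type*} {G H : SimpleGraph V} {A B S T : Finset V} {N : ℕ}

/-- `S` contains `N` pairwise disjoint sets each of which induces a subgraph with a cycle. -/
def HasCyclePacking (G : SimpleGraph V) (N : ℕ) (S : Finset V) : Prop :=
  ∃ C : Fin N → Finset V, (∀ i, C i ⊆ S ∧ ContainsCycle G (C i)) ∧ Pairwise (Disjoint on C)

namespace HasCyclePacking

lemma mono (h : HasCyclePacking G N S) (hST : S ⊆ T) : HasCyclePacking G N T := by
  obtain ⟨C, hC, hdisj⟩ := h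
  exact ⟨C, fun i ↦ ⟨(hC i).1.trans hST, (hC i).2⟩, hdisj⟩

lemma mono_graph (h : HasCyclePacking H N S) (hHG : H ≤ G) : HasCyclePacking G N S := by
  obtain ⟨C, hC, hdisj⟩ := h
  exact ⟨C, fun i ↦ ⟨(hC i).1, (hC i).2.mono_graph hHG⟩, hdisj⟩

lemma zero (G : SimpleGraph V) (S : Finset V) : HasCyclePacking G 0 S :=
  ⟨Fin.elim0, fun i ↦ i.elim0, fun i ↦ i.elim0⟩

lemma succ [DecidableEq V] (hBS : B ⊆ S) (hB : ContainsCycle G B)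
    (h : HasCyclePacking G N (S \ B)) : HasCyclePacking G (N + 1) S := by
  obtain ⟨C, hC, hdisj⟩ := h
  have hdisjB (i : Fin N) : Disjoint B (C i) := disjoint_sdiff.mono_right (hC i).1
  refine ⟨Fin.cons B C, Fin.cases ⟨hBS, hB⟩ fun i ↦ ⟨(hC i).1.trans sdiff_subset, (hC i).2⟩, ?_⟩
  refine Fin.cases (Fin.cases (fun h ↦ (h rfl).elim) fun j _ ↦ hdisjB j) fun i ↦
    Fin.cases (fun _ ↦ (hdisjB i).symm) fun j hij ↦ hdisj fun h ↦ hij (congrArg Fin.succ h)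

lemma of_card_le {ι : Type*} {s : Finset ι} {f : ι → Finset V} (hs : N ≤ #s)
    (hf : ∀ i ∈ s, f i ⊆ S ∧ ContainsCycle G (f i)) (hdisj : (s : Set ι).PairwiseDisjoint f) :
    HasCyclePacking G N S := by
  let e : Fin N ↪ s := (Fin.castLEEmb hs).trans s.equivFin.symm.toEmbedding
  exact ⟨fun i ↦ f (e i), fun i ↦ hf _ (e i).2, fun i j hij ↦
    hdisj (e i).2 (e j).2 fun h ↦ hij (e.injective (Subtype.ext h))⟩

end HasCyclePacking

lemma exists_subset_le_excess_and_two_le_edgeCount (H : SimpleGraph V) (A : Finset V) :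
    ∃ B ⊆ A, excess H A ≤ excess H B ∧ ∀ b ∈ B, 2 ≤ edgeCount H {b} B := by
  classical
  obtain ⟨B, hBA, hB⟩ := exists_minimal_le_of_wellFoundedLT
    (fun B ↦ excess H A ≤ excess H B) A le_rfl
  refine ⟨B, hBA, hB.prop, fun b hb ↦ ?_⟩
  by_contra! hlt
  refine hB.not_prop_of_lt (erase_ssubset hb) ?_
  have := hB.prop
  rw [excess_erase hb]
  omega

theorem hasCyclePacking_of_le_excess (hdeg : ∀ v B, edgeCount H {v} B ≤ 3)
    (hA : 1200001 * 2 ^ N ≤ excess H A) : HasCyclePacking H N A := by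
  classical
  induction N generalizing A with
  | zero => exact .zero H A
  | succ N ih =>
    obtain ⟨A', hA'A, hle, hdeg'⟩ := exists_subset_le_excess_and_two_le_edgeCount H A
    have hpow : (1 : ℤ) ≤ 2 ^ N := one_le_pow₀ one_le_two
    rw [pow_succ] at hA
    obtain ⟨B, hBA', hne, hB, hweight⟩ :=
      exists_light_excess_nonneg hdeg' (fun a _ ↦ hdeg a A') (by linarith)
    have := excess_sdiff_add_weight_le hBA' hB
    exact (HasCyclePacking.succ hBA' (containsCycle_iff_excess_nonneg.2 ⟨B, Subset.rfl, hne, hB⟩)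
      (ih (by linarith))).mono hA'A

end CyclePacking

section SubcubicSubgraph

variable {V : Type*} {G H K : SimpleGraph V} {A B C S : Finset V} {v x y : V}

lemma edgeCount_sup (h : Disjoint H K) (A B : Finset V) :
    edgeCount (H ⊔ K) A B = edgeCount H A B + edgeCount K A B := by
  classical
  have hdisj : Disjoint (H.interedges A B) (K.interedges A B) :=
    disjoint_filter.2 fun e _ ↦ SimpleGraph.disjoint_left.1 h e.1 e.2
  rw [edgeCount, edgeCount, edgeCount, ← card_union_of_disjoint (by convert hdisj)]
  congr 1
  ext e
  simp only [mem_union, SimpleGraph.mem_interedges_iff, SimpleGraph.sup_adj]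
  tauto

lemma edgeCount_eq_zero_of_forall_not_adj (h : ∀ w, ¬ G.Adj v w) (B : Finset V) :
    edgeCount G {v} B = 0 := by
  classical
  rw [edgeCount_singleton_left, filter_false_of_mem fun w _ ↦ h w, card_empty]

lemma edgeCount_edge_le_one (x y v : V) (B : Finset V) :
    edgeCount (SimpleGraph.edge x y) {v} B ≤ 1 := by
  classical
  rw [edgeCount_singleton_left, card_le_one]
  simp only [mem_filter, SimpleGraph.edge_adj]
  grind

lemma edgeCount_edge_eq_zero (hx : v ≠ x) (hy : v ≠ y) (B : Finset V) :
    edgeCount (SimpleGraph.edge x y) {v} B = 0 :=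
  edgeCount_eq_zero_of_forall_not_adj (by simp [SimpleGraph.edge_adj, hx, hy]) B

lemma two_le_edgeCount_edge (hxy : x ≠ y) (hx : x ∈ A) (hy : y ∈ A) :
    2 ≤ edgeCount (SimpleGraph.edge x y) A A := by
  classical
  rw [edgeCount, ← card_pair (a := (x, y)) (b := (y, x)) (by simp [hxy])]
  refine card_le_card ?_
  simp [insert_subset_iff, SimpleGraph.mk_mem_interedges_iff, SimpleGraph.edge_adj, hx, hy, hxy,
    hxy.symm]

lemma spanningCoe_induce_adj :
    (G.induce (S : Set V)).spanningCoe.Adj x y ↔ G.Adj x y ∧ x ∈ S ∧ y ∈ S := by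
  simp [SimpleGraph.map_adj]

lemma edgeCount_spanningCoe_induce (hA : A ⊆ S) (hB : B ⊆ S) :
    edgeCount (G.induce (S : Set V)).spanningCoe A B = edgeCount G A B :=
  edgeCount_congr fun a ha b hb ↦ by
    rw [spanningCoe_induce_adj, and_iff_left ⟨hA ha, hB hb⟩]

/-- The vertices in `A` and the edges of `H` form a subgraph of `G` with maximum degree at most
`3`. -/
structure IsSubcubicSubgraph (G H : SimpleGraph V) (A : Finset V) : Prop where
  le : H ≤ G
  mem_of_adj : ∀ ⦃x y⦄, H.Adj x y → x ∈ A
  edgeCount_le_three : ∀ v B, edgeCount H {v} B ≤ 3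

namespace IsSubcubicSubgraph

lemma edgeCount_eq_zero (hH : IsSubcubicSubgraph G H A) (hv : v ∉ A) (B : Finset V) :
    edgeCount H {v} B = 0 :=
  edgeCount_eq_zero_of_forall_not_adj (fun _ hadj ↦ hv (hH.mem_of_adj hadj)) B

lemma edgeCount_le (hH : IsSubcubicSubgraph G H A) (v : V) (B : Finset V) :
    edgeCount H {v} B ≤ edgeCount H {v} A := by
  classical
  rw [edgeCount_singleton_left, edgeCount_singleton_left]
  refine card_le_card fun w hw ↦ ?_
  rw [mem_filter] at hw ⊢
  exact ⟨hH.mem_of_adj hw.2.symm, hw.2⟩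

lemma bot_empty (G : SimpleGraph V) : IsSubcubicSubgraph G ⊥ ∅ where
  le := bot_le
  mem_of_adj _ _ h := h.elim
  edgeCount_le_three v B := by simp [edgeCount_eq_zero_of_forall_not_adj]

lemma containsCycle_inter [DecidableEq V] (hH : IsSubcubicSubgraph G H A)
    (h : ContainsCycle H S) : ContainsCycle H (A ∩ S) := by
  obtain ⟨C, hCS, hC⟩ := h.exists_minimal_subset
  refine hC.prop.mono fun v hv ↦ mem_inter.2 ⟨?_, hCS hv⟩
  by_contra hvA
  have := edgeCount_eq_two_of_minimal hC hv
  rw [hH.edgeCount_eq_zero hvA] at this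
  omega

lemma disjoint (hH : IsSubcubicSubgraph G H A) (hK : IsSubcubicSubgraph G K C)
    (hdisj : Disjoint A C) : Disjoint H K :=
  SimpleGraph.disjoint_left.2 fun _ _ hHadj hKadj ↦
    disjoint_left.1 hdisj (hH.mem_of_adj hHadj) (hK.mem_of_adj hKadj)

lemma spanningCoe_induce (hH : IsSubcubicSubgraph G H A) (B : Finset V) :
    IsSubcubicSubgraph G (H.induce (B : Set V)).spanningCoe B where
  le := (H.spanningCoe_induce_le _).trans hH.le
  mem_of_adj _ _ h := (spanningCoe_induce_adj.1 h).2.1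
  edgeCount_le_three v S :=
    (edgeCount_mono_graph (H.spanningCoe_induce_le _) _ _).trans (hH.edgeCount_le_three v S)

lemma exists_two_le_edgeCount (hH : IsSubcubicSubgraph G H A) :
    ∃ H' A', IsSubcubicSubgraph G H' A' ∧ excess H A ≤ excess H' A' ∧
      ∀ a ∈ A', 2 ≤ edgeCount H' {a} A' := by
  obtain ⟨B, -, hexcess, hdeg⟩ := exists_subset_le_excess_and_two_le_edgeCount H A
  refine ⟨_, B, hH.spanningCoe_induce B, ?_, fun b hb ↦ ?_⟩
  · rwa [excess.eq_def _ B, edgeCount_spanningCoe_induce Subset.rfl Subset.rfl]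
  · rw [edgeCount_spanningCoe_induce (singleton_subset_iff.2 hb) Subset.rfl]
    exact hdeg b hb

variable [DecidableEq V]

lemma sup_edge (hH : IsSubcubicSubgraph G H A) (hx : x ∈ A) (hadj : G.Adj x y)
    (hnadj : ¬ H.Adj x y) (hdegx : ∀ B, edgeCount H {x} B ≤ 2)
    (hdegy : ∀ B, edgeCount H {y} B ≤ 2) :
    IsSubcubicSubgraph G (H ⊔ SimpleGraph.edge x y) (insert y A) where
  le := sup_le hH.le ((SimpleGraph.edge_le_iff G).2 (.inr hadj))
  mem_of_adj u v huv := by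
    obtain huv | huv := huv
    · exact mem_insert_of_mem (hH.mem_of_adj huv)
    · rw [SimpleGraph.edge_adj] at huv
      grind
  edgeCount_le_three v B := by
    rw [edgeCount_sup ((SimpleGraph.disjoint_edge H).2 hnadj)]
    by_cases hv : v = x ∨ v = y
    · have := edgeCount_edge_le_one x y v B
      have : edgeCount H {v} B ≤ 2 := by obtain rfl | rfl := hv <;> solve_by_elim
      omega
    · rw [not_or] at hv
      rw [edgeCount_edge_eq_zero hv.1 hv.2]
      exact hH.edgeCount_le_three v B

lemma sup (hH : IsSubcubicSubgraph G H A) (hK : IsSubcubicSubgraph G K C)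
    (hdisj : Disjoint A C) : IsSubcubicSubgraph G (H ⊔ K) (A ∪ C) where
  le := sup_le hH.le hK.le
  mem_of_adj _ _ huv := mem_union.2 (huv.imp (hH.mem_of_adj ·) (hK.mem_of_adj ·))
  edgeCount_le_three v B := by
    rw [edgeCount_sup (hH.disjoint hK hdisj)]
    by_cases hv : v ∈ A
    · rw [hK.edgeCount_eq_zero (disjoint_left.1 hdisj hv), add_zero]
      exact hH.edgeCount_le_three v B
    · rw [hH.edgeCount_eq_zero hv, zero_add]
      exact hK.edgeCount_le_three v B

end IsSubcubicSubgraph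

/-- A subcubic subgraph of `G` whose excess is as large as possible. -/
structure IsExcessMaximal (G H : SimpleGraph V) (A : Finset V) : Prop
    extends IsSubcubicSubgraph G H A where
  excess_le : ∀ ⦃H' A'⦄, IsSubcubicSubgraph G H' A' → excess H' A' ≤ excess H A

namespace IsExcessMaximal

lemma of_excess_le (hH : IsExcessMaximal G H A) (hK : IsSubcubicSubgraph G K B)
    (h : excess H A ≤ excess K B) : IsExcessMaximal G K B :=
  ⟨hK, fun _ _ h' ↦ (hH.excess_le h').trans h⟩

lemma adj_of_edgeCount_le_two (hH : IsExcessMaximal G H A) (hx : x ∈ A) (hy : y ∈ A)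
    (hdegx : ∀ B, edgeCount H {x} B ≤ 2) (hdegy : ∀ B, edgeCount H {y} B ≤ 2)
    (hadj : G.Adj x y) : H.Adj x y := by
  classical
  by_contra hnadj
  have hle := hH.excess_le (hH.sup_edge hx hadj hnadj hdegx hdegy)
  have := two_le_edgeCount_edge hadj.ne hx hy
  rw [insert_eq_of_mem hy, excess, excess,
    edgeCount_sup ((SimpleGraph.disjoint_edge H).2 hnadj)] at hle
  omega

lemma sup_edge [DecidableEq V] (hH : IsExcessMaximal G H A) (hx : x ∈ A) (hy : y ∉ A)
    (hdegx : ∀ B, edgeCount H {x} B ≤ 2) (hadj : G.Adj x y) :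
    IsExcessMaximal G (H ⊔ SimpleGraph.edge x y) (insert y A) := by
  have hnadj : ¬ H.Adj x y := fun h ↦ hy (hH.mem_of_adj h.symm)
  have hdegy (B : Finset V) : edgeCount H {y} B = 0 := hH.edgeCount_eq_zero hy B
  refine hH.of_excess_le (hH.toIsSubcubicSubgraph.sup_edge hx hadj hnadj hdegx
    fun B ↦ (hdegy B).trans_le zero_le_two) ?_
  have := two_le_edgeCount_edge hadj.ne (mem_insert_of_mem hx) (mem_insert_self y A)
  have hexcess := excess_insert (G := H) hy
  rw [hdegy] at hexcess
  rw [excess.eq_def _ (insert y A)] at hexcess ⊢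
  rw [edgeCount_sup ((SimpleGraph.disjoint_edge H).2 hnadj)]
  omega

lemma edgeCount_sup_edge_le_two (hH : IsExcessMaximal G H A) (hy : y ∉ A) (hvx : v ≠ x)
    (hdeg : v ∈ A → ∀ B, edgeCount H {v} B ≤ 2) (B : Finset V) :
    edgeCount (H ⊔ SimpleGraph.edge x y) {v} B ≤ 2 := by
  rw [edgeCount_sup ((SimpleGraph.disjoint_edge H).2 fun h ↦ hy (hH.mem_of_adj h.symm))]
  by_cases hv : v ∈ A
  · rw [edgeCount_edge_eq_zero hvx (ne_of_mem_of_not_mem hv hy)]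
    exact hdeg hv B
  · rw [hH.edgeCount_eq_zero hv]
    exact (Nat.zero_add _).trans_le ((edgeCount_edge_le_one x y v B).trans one_le_two)

/- Adding the edges of `p` to `H` one after the other never lowers the excess, and the edge that
returns to `A` raises it. -/
lemma adj_snd_of_isPath {w : V} {p : G.Walk x w} (hH : IsExcessMaximal G H A) (hp : p.IsPath)
    (hx : x ∈ A) (hw : w ∈ A) (hne : x ≠ w)
    (hdeg : ∀ v ∈ p.support, v ∈ A → ∀ B, edgeCount H {v} B ≤ 2) : H.Adj x p.snd := by
  classical
  induction p generalizing H A with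
  | nil => exact (hne rfl).elim
  | @cons x y w hadj p ih =>
    rw [SimpleGraph.Walk.cons_isPath_iff] at hp
    have hdegx := hdeg x (by simp) hx
    rw [SimpleGraph.Walk.snd_cons]
    by_cases hy : y ∈ A
    · exact hH.adj_of_edgeCount_le_two hx hy hdegx (hdeg y (by simp) hy) hadj
    have hpdeg (v : V) (hv : v ∈ p.support) := hH.edgeCount_sup_edge_le_two (x := x) hy
      (ne_of_mem_of_not_mem hv hp.2) (hdeg v (List.mem_cons_of_mem x hv))
    obtain hH_adj | hedge := ih (hH.sup_edge hx hy hdegx hadj) hp.1 (mem_insert_self y A)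
      (mem_insert_of_mem hw) (ne_of_mem_of_not_mem hw hy).symm fun v hv _ ↦ hpdeg v hv
    · exact (hy (hH.mem_of_adj hH_adj)).elim
    · have hsnd : p.snd = x := by
        rw [SimpleGraph.edge_adj] at hedge
        grind
      exact (hp.2 (hsnd ▸ p.getVert_mem_support 1)).elim

lemma mem_edgeSet_of_isPath {w : V} {p : G.Walk x w} (hH : IsExcessMaximal G H A)
    (hp : p.IsPath) (hx : x ∈ A) (hw : w ∈ A)
    (hdeg : ∀ v ∈ p.support, v ∈ A → ∀ B, edgeCount H {v} B ≤ 2) :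
    ∀ e ∈ p.edges, e ∈ H.edgeSet := by
  induction p with
  | nil => simp
  | @cons x y w hadj p ih =>
    have hne : x ≠ w := fun h ↦ (SimpleGraph.Walk.cons_isPath_iff _ _).1 hp |>.2
      (h ▸ p.end_mem_support)
    have hxy : H.Adj x y := by simpa using hH.adj_snd_of_isPath hp hx hw hne hdeg
    rw [SimpleGraph.Walk.edges_cons, List.forall_mem_cons]
    exact ⟨hxy, ih hp.of_cons (hH.mem_of_adj hxy.symm) hw fun v hv ↦
      hdeg v (List.mem_cons_of_mem x hv)⟩

lemma mem_edgeSet_of_isCycle {a b : V} {c : G.Walk a a} (hH : IsExcessMaximal G H A)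
    (hc : c.IsCycle) (ha : a ∈ A) (hbc : b ∈ c.support) (hb : b ∈ A) (hne : a ≠ b)
    (hdeg : ∀ v ∈ c.support, v ∈ A → ∀ B, edgeCount H {v} B ≤ 2) :
    ∀ e ∈ c.edges, e ∈ H.edgeSet := by
  classical
  cases c with
  | nil => simp
  | @cons _ y _ hadj p =>
    rw [SimpleGraph.Walk.cons_isCycle_iff] at hc
    have hbp : b ∈ p.support := by simpa [hne.symm] using hbc
    have hay : H.Adj a y := by
      rw [← SimpleGraph.Walk.snd_cons (p.takeUntil b hbp) hadj]
      refine hH.adj_snd_of_isPath ?_ ha hb hne fun v hv ↦ hdeg v ?_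
      · exact (hc.1.takeUntil hbp).cons
          (SimpleGraph.Walk.endpoint_notMem_support_takeUntil hc.1 hbp hne)
      · exact List.cons_subset_cons a (p.support_takeUntil_subset_support hbp) hv
    rw [SimpleGraph.Walk.edges_cons, List.forall_mem_cons]
    exact ⟨hay, hH.mem_edgeSet_of_isPath hc.1 (hH.mem_of_adj hay.symm) ha fun v hv ↦
      hdeg v (List.mem_cons_of_mem a hv)⟩

lemma exists_excessMaximal [Finite V] (G : SimpleGraph V) : ∃ H A, IsExcessMaximal G H A := by
  have : Nonempty {q : SimpleGraph V × Finset V // IsSubcubicSubgraph G q.1 q.2} :=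
    ⟨⟨(⊥, ∅), .bot_empty G⟩⟩
  obtain ⟨⟨⟨H, A⟩, hH⟩, hmax⟩ := Finite.exists_max
    fun q : {q : SimpleGraph V × Finset V // IsSubcubicSubgraph G q.1 q.2} ↦ excess q.1.1 q.1.2
  exact ⟨H, A, hH, fun H' A' h ↦ hmax ⟨(H', A'), h⟩⟩

end IsExcessMaximal

end SubcubicSubgraph

section ErdosPosa

variable {V : Type*} {G H : SimpleGraph V} {A B C S Z : Finset V} {v z z' : V} {N : ℕ}

/-- Among the subcubic subgraphs of `G` of maximum excess and minimum degree at least `2`, the one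
with edges `H` and vertex set `A` has the largest number of vertices. -/
structure IsExtremalSubcubic (G H : SimpleGraph V) (A : Finset V) : Prop
    extends IsExcessMaximal G H A where
  two_le_edgeCount : ∀ a ∈ A, 2 ≤ edgeCount H {a} A
  card_le : ∀ ⦃H' A'⦄, IsExcessMaximal G H' A' → (∀ a ∈ A', 2 ≤ edgeCount H' {a} A') → #A' ≤ #A

/-- The vertices of degree `3` of the subcubic graph with edges `H` and vertex set `A`. -/
noncomputable def branchVertices (H : SimpleGraph V) (A : Finset V) : Finset V :=
  {a ∈ A | edgeCount H {a} A = 3}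

lemma exists_isExtremalSubcubic [Finite V] (G : SimpleGraph V) :
    ∃ H A, IsExtremalSubcubic G H A := by
  let p (q : SimpleGraph V × Finset V) : Prop :=
    IsExcessMaximal G q.1 q.2 ∧ ∀ a ∈ q.2, 2 ≤ edgeCount q.1 {a} q.2
  obtain ⟨H₀, A₀, hH₀⟩ := IsExcessMaximal.exists_excessMaximal G
  obtain ⟨H₁, A₁, hH₁, hexcess, hdeg₁⟩ := hH₀.exists_two_le_edgeCount
  have : Nonempty {q // p q} := ⟨⟨(H₁, A₁), hH₀.of_excess_le hH₁ hexcess, hdeg₁⟩⟩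
  obtain ⟨⟨⟨H, A⟩, hH, hdeg⟩, hmax⟩ := Finite.exists_max fun q : {q // p q} ↦ #q.1.2
  exact ⟨H, A, hH, hdeg, fun H' A' hH' hdeg' ↦ hmax ⟨(H', A'), hH', hdeg'⟩⟩

lemma isSubcubicSubgraph_spanningCoe_of_minimal (hC : Minimal (ContainsCycle G) C) :
    IsSubcubicSubgraph G (G.induce (C : Set V)).spanningCoe C where
  le := G.spanningCoe_induce_le _
  mem_of_adj _ _ h := (spanningCoe_induce_adj.1 h).2.1
  edgeCount_le_three v B := by
    classical
    by_cases hv : v ∈ C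
    · calc edgeCount (G.induce (C : Set V)).spanningCoe {v} B ≤ edgeCount G {v} C := by
            rw [edgeCount_singleton_left, edgeCount_singleton_left]
            refine card_le_card fun w hw ↦ ?_
            simp only [mem_filter, spanningCoe_induce_adj] at hw ⊢
            exact ⟨hw.2.2.2, hw.2.1⟩
        _ ≤ 3 := by rw [edgeCount_eq_two_of_minimal hC hv]; norm_num
    · rw [edgeCount_eq_zero_of_forall_not_adj fun w h ↦ hv (spanningCoe_induce_adj.1 h).2.1]
      norm_num

lemma exists_isCycle_of_containsCycle_insert [DecidableEq V] (hS : ¬ ContainsCycle G S)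
    (h : ContainsCycle G (insert z S)) :
    ∃ c : G.Walk z z, c.IsCycle ∧ ∀ x ∈ c.support, x ∈ insert z S := by
  obtain ⟨v, c, hc, hcS⟩ := containsCycle_iff_exists_isCycle.1 h
  have hz : z ∈ c.support := by
    by_contra hz
    exact hS (containsCycle_iff_exists_isCycle.2 ⟨v, c, hc, fun x hx ↦
      mem_of_mem_insert_of_ne (hcS x hx) (ne_of_mem_of_not_mem hx hz)⟩)
  exact ⟨c.rotate z hz, hc.rotate hz, fun x hx ↦
    hcS x ((SimpleGraph.Walk.mem_support_rotate_iff c z hz).1 hx)⟩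

lemma IsExcessMaximal.eq_of_walk {w : V} (hH : IsExcessMaximal G H A) (hz : z ∈ A) (hz' : z' ∈ A)
    (hdeg : ∀ B, edgeCount H {z} B ≤ 2) (hdeg' : ∀ B, edgeCount H {z'} B ≤ 2)
    (q : G.Walk z w) (q' : G.Walk z' w) (hq : ∀ x ∈ q.support, x ∈ A → x = z)
    (hq' : ∀ x ∈ q'.support, x ∈ A → x = z') : z = z' := by
  classical
  by_contra hne
  let p := (q.append q'.reverse).bypass
  have hp_edges {e} (he : e ∈ p.edges) : e ∈ q.edges ∨ e ∈ q'.edges := by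
    simpa using SimpleGraph.Walk.edges_bypass_subset_edges _ he
  have hp_support {x} (hx : x ∈ p.support) (hxA : x ∈ A) : x = z ∨ x = z' := by
    have : x ∈ q.support ∨ x ∈ q'.support := by
      simpa using SimpleGraph.Walk.support_bypass_subset_support _ hx
    exact this.imp (hq x · hxA) (hq' x · hxA)
  have hadj : H.Adj z p.snd := by
    refine hH.adj_snd_of_isPath (SimpleGraph.Walk.bypass_isPath _) hz hz' hne fun v hv hvA ↦ ?_
    obtain rfl | rfl := hp_support hv hvA
    exacts [hdeg, hdeg']
  have hsnd : p.snd = z' := (hp_support (p.getVert_mem_support 1)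
    (hH.mem_of_adj hadj.symm)).resolve_left hadj.ne'
  have hedge := p.mk_start_snd_mem_edges (SimpleGraph.Walk.not_nil_of_ne hne)
  rw [hsnd] at hedge
  obtain he | he := hp_edges hedge
  · exact hne (hq z' (q.snd_mem_support_of_mem_edges he) hz').symm
  · exact hne (hq' z (q'.fst_mem_support_of_mem_edges he) hz)

namespace IsExtremalSubcubic

lemma card_branchVertices (hH : IsExtremalSubcubic G H A) :
    (#(branchVertices H A) : ℤ) = excess H A := by
  rw [branchVertices, card_filter, excess_eq_sum, Nat.cast_sum]
  refine sum_congr rfl fun a ha ↦ ?_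
  have := hH.two_le_edgeCount a ha
  have := hH.edgeCount_le_three a A
  split_ifs <;> omega

lemma edgeCount_le_two (hH : IsExtremalSubcubic G H A) (hv : v ∈ A)
    (hv' : v ∉ branchVertices H A) (B : Finset V) : edgeCount H {v} B ≤ 2 := by
  have := hH.edgeCount_le v B
  have := hH.edgeCount_le_three v A
  have : edgeCount H {v} A ≠ 3 := fun h ↦ hv' (mem_filter.2 ⟨hv, h⟩)
  omega

lemma not_containsCycle_of_disjoint (hH : IsExtremalSubcubic G H A) (hdisj : Disjoint A S) :
    ¬ ContainsCycle G S := by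
  classical
  intro h
  obtain ⟨C, hCS, hC⟩ := h.exists_minimal_subset
  have hAC : Disjoint A C := hdisj.mono_right hCS
  let K := (G.induce (C : Set V)).spanningCoe
  have hK : IsSubcubicSubgraph G K C := isSubcubicSubgraph_spanningCoe_of_minimal hC
  have hexcess : excess H A ≤ excess (H ⊔ K) (A ∪ C) := by
    have hKC : excess K C = 0 := by
      rw [excess, edgeCount_spanningCoe_induce Subset.rfl Subset.rfl, ← excess,
        excess_eq_zero_of_minimal hC]
    have := excess_mono_graph (le_sup_left : H ≤ H ⊔ K) A
    have := excess_mono_graph (le_sup_right : K ≤ H ⊔ K) C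
    rw [excess_union hAC]
    omega
  have hdeg : ∀ v ∈ A ∪ C, 2 ≤ edgeCount (H ⊔ K) {v} (A ∪ C) := by
    intro v hv
    obtain hv | hv := mem_union.1 hv
    · exact (hH.two_le_edgeCount v hv).trans <|
        (edgeCount_mono_graph le_sup_left _ _).trans (edgeCount_mono Subset.rfl subset_union_left)
    · rw [← edgeCount_eq_two_of_minimal hC hv,
        ← edgeCount_spanningCoe_induce (singleton_subset_iff.2 hv) Subset.rfl]
      exact (edgeCount_mono_graph le_sup_right _ _).trans
        (edgeCount_mono Subset.rfl subset_union_right)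
  have := hH.card_le (hH.of_excess_le (hH.sup hK hAC) hexcess) hdeg
  rw [card_union_of_disjoint hAC] at this
  have := (nonempty_and_excess_nonneg_of_minimal hC).1.card_pos
  omega

variable [Fintype V] [DecidableEq V]

lemma hasCyclePacking_of_card_le (hH : IsExtremalSubcubic G H A)
    (hZ : Z ⊆ A \ branchVertices H A) (hcycle : ∀ z ∈ Z, ContainsCycle G (insert z Aᶜ))
    (hN : N ≤ #Z) : HasCyclePacking G N univ := by
  have hc (z : V) (hz : z ∈ Z) := exists_isCycle_of_containsCycle_insert
    (hH.not_containsCycle_of_disjoint disjoint_compl_right) (hcycle z hz)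
  choose! c hc hcA using hc
  have eq_of_mem {z} (hz : z ∈ Z) (x : V) (hx : x ∈ (c z).support) (hxA : x ∈ A) : x = z := by
    simpa [hxA] using hcA z hz x hx
  refine .of_card_le (f := fun z ↦ (c z).support.toFinset) hN (fun z hz ↦ ⟨subset_univ _, ?_⟩) ?_
  · exact containsCycle_iff_exists_isCycle.2 ⟨z, c z, hc z hz, by simp⟩
  intro z hz z' hz' hne
  refine disjoint_left.2 fun w hw hw' ↦ hne ?_
  rw [List.mem_toFinset] at hw hw'
  obtain ⟨hzA, hzU⟩ := mem_sdiff.1 (hZ hz)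
  obtain ⟨hzA', hzU'⟩ := mem_sdiff.1 (hZ hz')
  exact hH.eq_of_walk hzA hzA' (hH.edgeCount_le_two hzA hzU) (hH.edgeCount_le_two hzA' hzU')
    ((c z).takeUntil w hw) ((c z').takeUntil w hw')
    (fun x hx ↦ eq_of_mem hz x (SimpleGraph.Walk.support_takeUntil_subset_support _ _ hx))
    (fun x hx ↦ eq_of_mem hz' x (SimpleGraph.Walk.support_takeUntil_subset_support _ _ hx))

lemma containsCycle_inter_of_containsCycle (hH : IsExtremalSubcubic G H A)
    (hS : ContainsCycle G S) (hdisj : Disjoint S (branchVertices H A))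
    (hattach : ∀ z ∈ A ∩ S, ¬ ContainsCycle G (insert z Aᶜ)) : ContainsCycle H (A ∩ S) := by
  obtain ⟨v, c₀, hc₀, hc₀S⟩ := containsCycle_iff_exists_isCycle.1 hS
  obtain ⟨a, hac, haA⟩ : ∃ a ∈ c₀.support, a ∈ A := by
    by_contra! hcA
    exact hH.not_containsCycle_of_disjoint disjoint_compl_right
      (containsCycle_iff_exists_isCycle.2 ⟨v, c₀, hc₀, fun x hx ↦ mem_compl.2 (hcA x hx)⟩)
  obtain ⟨c, hc, hcS⟩ : ∃ c : G.Walk a a, c.IsCycle ∧ ∀ x ∈ c.support, x ∈ S :=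
    ⟨c₀.rotate a hac, hc₀.rotate hac, fun x hx ↦
      hc₀S x ((SimpleGraph.Walk.mem_support_rotate_iff c₀ a hac).1 hx)⟩
  obtain ⟨b, hbc, hbA, hne⟩ : ∃ b ∈ c.support, b ∈ A ∧ a ≠ b := by
    by_contra! hcA
    refine hattach a (mem_inter.2 ⟨haA, hcS a c.start_mem_support⟩)
      (containsCycle_iff_exists_isCycle.2 ⟨a, c, hc, fun x hx ↦ ?_⟩)
    rw [mem_insert, mem_compl, or_iff_not_imp_right, not_not]
    exact fun hxA ↦ (hcA x hx hxA).symm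
  have hedges : ∀ e ∈ c.edges, e ∈ H.edgeSet :=
    hH.mem_edgeSet_of_isCycle hc haA hbc hbA hne fun v hv hvA ↦
      hH.edgeCount_le_two hvA (disjoint_left.1 hdisj (hcS v hv))
  refine hH.containsCycle_inter (containsCycle_iff_exists_isCycle.2
    ⟨a, c.transfer H hedges, hc.transfer hedges, ?_⟩)
  rwa [SimpleGraph.Walk.support_transfer]

end IsExtremalSubcubic

lemma edgeCount_sdiff_eq_zero_of_minimal [DecidableEq V] (hC : Minimal (ContainsCycle G) C)
    (hCS : C ⊆ S) (hdeg : ∀ v ∈ S, edgeCount G {v} S ≤ 2) : edgeCount G C (S \ C) = 0 := by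
  rw [edgeCount_eq_sum]
  refine sum_eq_zero fun v hv ↦ ?_
  have hsum := edgeCount_union_right (G := G) (disjoint_sdiff (s := C) (t := S)) {v}
  rw [union_sdiff_of_subset hCS, edgeCount_eq_two_of_minimal hC hv] at hsum
  have := hdeg v (hCS hv)
  omega

lemma hasCyclePacking_or_exists_of_edgeCount_le_two [DecidableEq V] (N : ℕ)
    (hdeg : ∀ v ∈ S, edgeCount G {v} S ≤ 2) :
    HasCyclePacking G N S ∨ ∃ X, #X ≤ N ∧ ¬ ContainsCycle G (S \ X) := by
  induction N generalizing S with
  | zero => exact .inl (.zero G S)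
  | succ N ih =>
    by_cases hS : ContainsCycle G S
    swap
    · exact .inr ⟨∅, by simp, by rwa [sdiff_empty]⟩
    obtain ⟨C, hCS, hC⟩ := hS.exists_minimal_subset
    obtain hpack | ⟨X, hX, hacyclic⟩ := ih (S := S \ C) fun v hv ↦
      (edgeCount_mono Subset.rfl sdiff_subset).trans (hdeg v (mem_sdiff.1 hv).1)
    · exact .inl (.succ hCS hC.prop hpack)
    obtain ⟨v, hv⟩ := (nonempty_and_excess_nonneg_of_minimal hC).1
    refine .inr ⟨insert v X, (card_insert_le v X).trans (Nat.add_le_add_right hX 1), ?_⟩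
    have hedge : edgeCount G (C.erase v) ((S \ C) \ X) ≤ 1 :=
      ((edgeCount_mono (erase_subset v C) sdiff_subset).trans_eq
        (edgeCount_sdiff_eq_zero_of_minimal hC hCS hdeg)).trans zero_le_one
    refine mt (·.mono ?_) (not_containsCycle_union (hC.not_prop_of_lt (erase_ssubset hv)) hacyclic
      ((disjoint_sdiff.mono_left (erase_subset v C)).mono_right sdiff_subset) hedge)
    grind

/-- An upper bound for the size of a smallest feedback vertex set of a graph without `N` disjoint
cycles. -/
def erdosPosaBound (N : ℕ) : ℕ :=
  1200001 * 2 ^ N + 2 * N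

theorem erdos_posa [Fintype V] [DecidableEq V] (G : SimpleGraph V) (N : ℕ) :
    HasCyclePacking G N univ ∨ ∃ X : Finset V, #X ≤ erdosPosaBound N ∧ ¬ ContainsCycle G Xᶜ := by
  classical
  rw [or_iff_not_imp_left]
  intro hpack
  obtain ⟨H, A, hH⟩ := exists_isExtremalSubcubic G
  have hpackH {S} (h : HasCyclePacking H N S) : False :=
    hpack ((h.mono_graph hH.le).mono (subset_univ S))
  set U := branchVertices H A with hU
  have hU_card : #U ≤ 1200001 * 2 ^ N := by
    by_contra! h
    refine hpackH (hasCyclePacking_of_le_excess (A := A) hH.edgeCount_le_three ?_)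
    rw [← hH.card_branchVertices]
    exact_mod_cast h.le
  let Z := {z ∈ A \ U | ContainsCycle G (insert z Aᶜ)}
  have hZ_card : #Z ≤ N := by
    by_contra! h
    exact hpack (hH.hasCyclePacking_of_card_le (filter_subset _ _)
      (fun z hz ↦ (mem_filter.1 hz).2) h.le)
  obtain ⟨X, hX_card, hX⟩ := (hasCyclePacking_or_exists_of_edgeCount_le_two N
    fun v hv ↦ hH.edgeCount_le_two (mem_sdiff.1 hv).1 (mem_sdiff.1 hv).2 _).resolve_left hpackH
  refine ⟨U ∪ Z ∪ X, ?_, fun h ↦ hX ?_⟩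
  · grind [erdosPosaBound, card_union_le (U ∪ Z) X, card_union_le U Z]
  refine (hH.containsCycle_inter_of_containsCycle h ?_ fun z hz hcycle ↦ ?_).mono ?_
  · exact disjoint_left.2 fun x hx hxU ↦ by simp [hU, hxU] at hx
  · simp only [Z, mem_inter, mem_compl, mem_union, mem_filter, mem_sdiff] at hz
    tauto
  · grind [mem_compl]

end ErdosPosa

section Ramsey

variable {α : Type*} [LinearOrder α] {R : α → α → Prop} {s t : Finset α} {m : ℕ}

/-- Some `m`-element subset of `s` is homogeneous for `R`: all its pairs `i < j` satisfy `R i j`. -/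
def HasHomogeneousSubset (R : α → α → Prop) (s : Finset α) (m : ℕ) : Prop :=
  ∃ t ⊆ s, #t = m ∧ ∀ i ∈ t, ∀ j ∈ t, i < j → R i j

lemma HasHomogeneousSubset.zero (R : α → α → Prop) (s : Finset α) :
    HasHomogeneousSubset R s 0 :=
  ⟨∅, empty_subset s, card_empty, by simp⟩

lemma HasHomogeneousSubset.mono (hst : s ⊆ t) (h : HasHomogeneousSubset R s m) :
    HasHomogeneousSubset R t m :=
  h.imp fun _ hu ↦ ⟨hu.1.trans hst, hu.2⟩

lemma HasHomogeneousSubset.succ {v : α} (hst : s ⊆ t) (hv : v ∈ t)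
    (hvs : ∀ j ∈ s, v < j ∧ R v j) (h : HasHomogeneousSubset R s m) :
    HasHomogeneousSubset R t (m + 1) := by
  obtain ⟨u, hus, hcard, hu⟩ := h
  have hvu : v ∉ u := fun hvu ↦ (hvs v (hus hvu)).1.false
  refine ⟨insert v u, insert_subset hv (hus.trans hst), by rw [card_insert_of_notMem hvu, hcard],
    ?_⟩
  intro i hi j hj hij
  rcases mem_insert.1 hi with rfl | hiu <;> rcases mem_insert.1 hj with rfl | hju
  · exact hij.false.elim
  · exact (hvs j (hus hju)).2
  · exact (hij.not_gt (hvs i (hus hiu)).1).elim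
  · exact hu i hiu j hju hij

lemma HasHomogeneousSubset.exists_orderEmbedding (h : HasHomogeneousSubset R s m) :
    ∃ e : Fin m ↪o α, ∀ i j, i < j → R (e i) (e j) := by
  obtain ⟨t, -, hcard, ht⟩ := h
  exact ⟨t.orderEmbOfFin hcard, fun i j hij ↦ ht _ (t.orderEmbOfFin_mem hcard i) _
    (t.orderEmbOfFin_mem hcard j) ((t.orderEmbOfFin hcard).strictMono hij)⟩

theorem hasHomogeneousSubset_or_not (R : α → α → Prop) {p q : ℕ} {s : Finset α}
    (hs : 2 ^ (p + q) ≤ #s) :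
    HasHomogeneousSubset R s p ∨ HasHomogeneousSubset (fun i j ↦ ¬ R i j) s q := by
  classical
  induction p generalizing s q with
  | zero => exact .inl (.zero R s)
  | succ p ihp =>
  induction q generalizing s with
  | zero => exact .inr (.zero _ s)
  | succ q ihq =>
  have hs₀ : s.Nonempty := card_pos.1 ((Nat.two_pow_pos _).trans_le hs)
  set v := s.min' hs₀ with hv_def
  have hv : v ∈ s := s.min'_mem hs₀
  have hlt {j} (hj : j ∈ s.erase v) : v < j := s.min'_lt_of_mem_erase_min' hs₀ hj
  have hcard := card_filter_add_card_filter_not (s := s.erase v) (fun j ↦ R v j)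
  rw [card_erase_of_mem hv] at hcard
  have hsub (Q : α → Prop) [DecidablePred Q] : {j ∈ s.erase v | Q j} ⊆ s :=
    (filter_subset _ _).trans (erase_subset v s)
  rcases le_or_gt (2 ^ (p + (q + 1))) #{j ∈ s.erase v | R v j} with hR | hR
  · refine (ihp hR).imp (.succ (hsub _) hv fun j hj ↦ ?_) (.mono (hsub _))
    exact ⟨hlt (mem_filter.1 hj).1, (mem_filter.1 hj).2⟩
  · have hR' : 2 ^ (p + 1 + q) ≤ #{j ∈ s.erase v | ¬ R v j} := by
      rw [show p + 1 + (q + 1) = p + (q + 1) + 1 by omega, pow_succ] at hs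
      rw [show p + 1 + q = p + (q + 1) by omega]
      omega
    refine (ihq hR').imp (.mono (hsub _)) (.succ (hsub _) hv fun j hj ↦ ?_)
    exact ⟨hlt (mem_filter.1 hj).1, (mem_filter.1 hj).2⟩

lemma exists_orderEmbedding_or_not {p q n : ℕ} (hn : 2 ^ (p + q) ≤ n)
    (R : Fin n → Fin n → Prop) :
    (∃ e : Fin p ↪o Fin n, ∀ i j, i < j → R (e i) (e j)) ∨
      ∃ e : Fin q ↪o Fin n, ∀ i j, i < j → ¬ R (e i) (e j) :=
  (hasHomogeneousSubset_or_not R (s := univ) (by rwa [card_fin])).imp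
    (·.exists_orderEmbedding) (·.exists_orderEmbedding)

/-- An upper bound for the Ramsey number of colourings of pairs with three colours. -/
def ramseyBound (a b c : ℕ) : ℕ :=
  2 ^ (a + 2 ^ (b + c))

theorem exists_orderEmbedding_two_le_or_eq_one_or_eq_zero {a b c n : ℕ}
    (hn : ramseyBound a b c ≤ n) (x : Fin n → Fin n → ℕ) :
    (∃ e : Fin a ↪o Fin n, ∀ i j, i < j → 2 ≤ x (e i) (e j)) ∨
      (∃ e : Fin b ↪o Fin n, ∀ i j, i < j → x (e i) (e j) = 1) ∨
      ∃ e : Fin c ↪o Fin n, ∀ i j, i < j → x (e i) (e j) = 0 := by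
  refine (exists_orderEmbedding_or_not hn fun i j ↦ 2 ≤ x i j).imp_right fun ⟨e, he⟩ ↦ ?_
  refine (exists_orderEmbedding_or_not le_rfl fun i j ↦ x (e i) (e j) = 1).imp
    (fun ⟨f, hf⟩ ↦ ⟨f.trans e, hf⟩) fun ⟨f, hf⟩ ↦ ⟨f.trans e, fun i j hij ↦ ?_⟩
  have h_ne_one : x (e (f i)) (e (f j)) ≠ 1 := hf i j hij
  have h_lt_two := he _ _ (f.strictMono hij)
  simp only [RelEmbedding.coe_trans, comp_apply]
  omega

end Ramsey

section MutuallyCyclic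

variable {V : Type*} {G : SimpleGraph V} {k : ℕ}

/-- The sets `D i` are disjoint and induce forests, but any two of them together contain a cycle:
the colour classes of a complete arboreal colouring of their union. -/
structure IsMutuallyCyclic [DecidableEq V] {ι : Type*} (G : SimpleGraph V) (D : ι → Finset V) :
    Prop where
  not_containsCycle : ∀ i, ¬ ContainsCycle G (D i)
  disjoint : Pairwise (Disjoint on D)
  containsCycle : Pairwise fun i j ↦ ContainsCycle G (D i ∪ D j)

open Classical in
/-- `G` has `k` disjoint sets of vertices which form a mutually cyclic family. -/
def HasMutuallyCyclic (G : SimpleGraph V) (k : ℕ) : Prop :=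
  ∃ D : Fin k → Finset V, IsMutuallyCyclic G D

lemma IsMutuallyCyclic.hasMutuallyCyclic [DecidableEq V] {D : Fin k → Finset V}
    (hD : IsMutuallyCyclic G D) : HasMutuallyCyclic G k :=
  ⟨D, by convert hD⟩

section

variable [DecidableEq V]

lemma IsMutuallyCyclic.cons {D : Fin k → Finset V} (hD : IsMutuallyCyclic G D) {E : Finset V}
    (hE : ¬ ContainsCycle G E) (hdisj : ∀ i, Disjoint E (D i))
    (hcycle : ∀ i, ContainsCycle G (E ∪ D i)) :
    IsMutuallyCyclic G (Fin.cons E D : Fin (k + 1) → Finset V) where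
  not_containsCycle := Fin.cases hE hD.not_containsCycle
  disjoint := by
    refine Fin.cases (Fin.cases (fun h ↦ (h rfl).elim) fun j _ ↦ hdisj j) fun i ↦
      Fin.cases (fun _ ↦ (hdisj i).symm) fun j hij ↦ hD.disjoint (ne_of_apply_ne Fin.succ hij)
  containsCycle := by
    refine Fin.cases (Fin.cases (fun h ↦ (h rfl).elim) fun j _ ↦ hcycle j) fun i ↦
      Fin.cases (fun _ ↦ ?_) fun j hij ↦ hD.containsCycle (ne_of_apply_ne Fin.succ hij)
    simpa only [Fin.cons_succ, Fin.cons_zero, union_comm] using hcycle i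

variable {ι : Type*}

lemma isMutuallyCyclic_of_two_le_edgeCount {D : ι → Finset V} (hD : ∀ i, InducesTree G (D i))
    (hdisj : Pairwise (Disjoint on D)) (hedge : Pairwise fun i j ↦ 2 ≤ edgeCount G (D i) (D j)) :
    IsMutuallyCyclic G D where
  not_containsCycle i := (hD i).not_containsCycle
  disjoint := hdisj
  containsCycle i j hij := (hD i).containsCycle_union (hD j) (hdisj hij) (hedge hij)

lemma isMutuallyCyclic_union_of_edgeCount_eq_one {X Y : ι → Finset V}
    (hX : ∀ i, InducesTree G (X i)) (hY : ∀ i, InducesTree G (Y i))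
    (hXX : Pairwise (Disjoint on X)) (hYY : Pairwise (Disjoint on Y))
    (hXY : ∀ i j, Disjoint (X i) (Y j)) (hedge : ∀ i j, edgeCount G (X i) (Y j) = 1) :
    IsMutuallyCyclic G fun i ↦ X i ∪ Y i := by
  refine isMutuallyCyclic_of_two_le_edgeCount
    (fun i ↦ (hX i).union (hY i) (hXY i i) (hedge i i)) (fun i j hij ↦ ?_) fun i j _ ↦ ?_
  · exact disjoint_union_left.2 ⟨disjoint_union_right.2 ⟨hXX hij, hXY i j⟩,
      disjoint_union_right.2 ⟨(hXY j i).symm, hYY hij⟩⟩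
  · beta_reduce
    rw [edgeCount_union_left (hXY i i), edgeCount_union_right (hXY j j),
      edgeCount_union_right (hXY j j), hedge i j, edgeCount_comm G (Y i) (X j), hedge j i]
    omega

end

lemma hasMutuallyCyclic_of_biclique {X W : Finset V} (hX : k ≤ #X) (hW : k ≤ #W)
    (hadj : ∀ x ∈ X, ∀ w ∈ W, G.Adj x w) : HasMutuallyCyclic G k := by
  classical
  obtain ⟨x⟩ : Nonempty (Fin k ↪ X) := Embedding.nonempty_of_card_le (by simpa using hX)
  obtain ⟨w⟩ : Nonempty (Fin k ↪ W) := Embedding.nonempty_of_card_le (by simpa using hW)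
  have hxw (i j : Fin k) : G.Adj (x i : V) (w j : V) := hadj _ (x i).2 _ (w j).2
  refine (isMutuallyCyclic_union_of_edgeCount_eq_one (X := fun i ↦ {(x i : V)})
    (Y := fun j ↦ {(w j : V)}) (fun i ↦ .singleton G _) (fun j ↦ .singleton G _)
    (fun i j hij ↦ ?_) (fun i j hij ↦ ?_) (fun i j ↦ ?_) fun i j ↦ ?_).hasMutuallyCyclic
  · simpa [onFun, Subtype.ext_iff] using x.injective.ne hij
  · simpa [onFun, Subtype.ext_iff] using w.injective.ne hij
  · simpa using (hxw i j).ne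
  · rw [edgeCount_singleton_left, filter_singleton, if_pos (hxw i j), card_singleton]

lemma castAdd_lt_natAdd {m n : ℕ} (i : Fin m) (j : Fin n) : Fin.castAdd n i < Fin.natAdd m j :=
  i.2.trans_le (Nat.le_add_right m j)

theorem hasMutuallyCyclic_or_exists_embedding_edgeCount_eq_zero {q n : ℕ}
    (hn : ramseyBound k (k + k) q ≤ n) {P : Fin n → Finset V} (hP : ∀ i, InducesTree G (P i))
    (hdisj : Pairwise (Disjoint on P)) :
    HasMutuallyCyclic G k ∨
      ∃ e : Fin q ↪ Fin n, Pairwise fun i j ↦ edgeCount G (P (e i)) (P (e j)) = 0 := by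
  classical
  have hcomm (i j : Fin n) : edgeCount G (P i) (P j) = edgeCount G (P j) (P i) :=
    edgeCount_comm G _ _
  rcases exists_orderEmbedding_two_le_or_eq_one_or_eq_zero hn fun i j ↦ edgeCount G (P i) (P j)
    with ⟨e, he⟩ | ⟨e, he⟩ | ⟨e, he⟩
  · refine .inl (isMutuallyCyclic_of_two_le_edgeCount (D := P ∘ e) (fun i ↦ hP (e i))
      (hdisj.comp_of_injective e.injective) fun i j hij ↦ ?_).hasMutuallyCyclic
    rcases hij.lt_or_gt with h | h
    · exact he i j h
    · exact (he j i h).trans_eq (hcomm _ _)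
  · exact .inl (isMutuallyCyclic_union_of_edgeCount_eq_one (X := fun i ↦ P (e (Fin.castAdd k i)))
      (Y := fun i ↦ P (e (Fin.natAdd k i))) (fun i ↦ hP _) (fun i ↦ hP _)
      (hdisj.comp_of_injective (e.injective.comp (Fin.castAdd_injective k k)))
      (hdisj.comp_of_injective (e.injective.comp (Fin.natAdd_injective k k)))
      (fun i j ↦ hdisj (e.injective.ne (castAdd_lt_natAdd i j).ne))
      fun i j ↦ he _ _ (castAdd_lt_natAdd i j)).hasMutuallyCyclic
  · refine .inr ⟨e.toEmbedding, fun i j hij ↦ ?_⟩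
    rcases hij.lt_or_gt with h | h
    · exact he i j h
    · exact (hcomm _ _).trans (he j i h)

end MutuallyCyclic

section DoublyJoined

variable {V : Type*} {G : SimpleGraph V} {W W' S S' P R : Finset V} {𝒯 𝒯' : Finset (Finset V)}
  {x y : V} {a b k : ℕ}

lemma InducesTree.exists_erase [DecidableEq V] (hP : InducesTree G P) (hcard : 1 < #P) :
    ∃ x ∈ P, InducesTree G (P.erase x) := by
  obtain ⟨x, hx, hdeg⟩ : ∃ x ∈ P, edgeCount G {x} P ≤ 1 := by
    by_contra! h
    have := excess_nonneg_of_two_le_edgeCount h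
    rw [hP.excess_eq] at this
    omega
  have hacyclic : ¬ ContainsCycle G (P.erase x) := mt (·.mono (erase_subset x P))
    hP.not_containsCycle
  have hle := excess_le_neg_two_of_subset hacyclic Subset.rfl
    (card_pos.1 (by rw [card_erase_of_mem hx]; omega))
  refine ⟨x, hx, hacyclic, ?_⟩
  rw [excess_erase hx, hP.excess_eq] at hle ⊢
  omega

/-- The vertices of `W` have at least two neighbours in each of the disjoint trees in `𝒯`, none of
which meets `W`. -/
structure IsDoublyJoined (G : SimpleGraph V) (W : Finset V) (𝒯 : Finset (Finset V)) : Prop where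
  inducesTree : ∀ P ∈ 𝒯, InducesTree G P
  pairwiseDisjoint : (𝒯 : Set (Finset V)).PairwiseDisjoint id
  disjoint : ∀ P ∈ 𝒯, Disjoint W P
  two_le_edgeCount : ∀ P ∈ 𝒯, ∀ w ∈ W, 2 ≤ edgeCount G {w} P

lemma IsDoublyJoined.mono (h : IsDoublyJoined G W 𝒯) (hW : W' ⊆ W) (h𝒯 : 𝒯' ⊆ 𝒯) :
    IsDoublyJoined G W' 𝒯' where
  inducesTree P hP := h.inducesTree P (h𝒯 hP)
  pairwiseDisjoint := h.pairwiseDisjoint.subset (coe_subset.2 h𝒯)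
  disjoint P hP := (h.disjoint P (h𝒯 hP)).mono_left hW
  two_le_edgeCount P hP w hw := h.two_le_edgeCount P (h𝒯 hP) w (hW hw)

/- Prune leaves of `P` as long as at least `2 * m` vertices of `W` keep two neighbours in the
tree. When the pruning stops at `R`, removing a further leaf `x` either leaves `m` such vertices,
or costs `m` of them their second neighbour, and these are then adjacent to `x`. -/
lemma exists_subtree_or_common_neighbour {m : ℕ} (hm : 0 < m)
    (hP : InducesTree G P) (hW : 2 * m ≤ #W) (htwo : ∀ w ∈ W, 2 ≤ edgeCount G {w} P) :
    ∃ W' ⊆ W, m ≤ #W' ∧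
      ((∃ y ∈ W, ∃ R ⊆ P, InducesTree G R ∧ edgeCount G {y} R ≤ 1 ∧
          ∀ w ∈ W', 2 ≤ edgeCount G {w} R) ∨
        ∃ x ∈ P, ∀ w ∈ W', G.Adj x w) := by
  classical
  let joined (R : Finset V) : Finset V := {w ∈ W | 2 ≤ edgeCount G {w} R}
  obtain ⟨R, hRP, hR⟩ := exists_minimal_le_of_wellFoundedLT
    (fun R ↦ InducesTree G R ∧ 2 * m ≤ #(joined R)) P
    ⟨hP, by rwa [show joined P = W from filter_true_of_mem htwo]⟩
  obtain ⟨hRtree, hRjoined⟩ := hR.prop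
  have hRcard : 1 < #R := by
    obtain ⟨w, hw⟩ : (joined R).Nonempty := card_pos.1 (by omega)
    have := (mem_filter.1 hw).2
    rw [edgeCount_singleton_left] at this
    exact this.trans (card_filter_le R _)
  obtain ⟨x, hx, hxtree⟩ := hRtree.exists_erase hRcard
  have hlt : #(joined (R.erase x)) < 2 * m := by
    by_contra! h
    exact hR.not_prop_of_lt (erase_ssubset hx) ⟨hxtree, h⟩
  rcases le_or_gt m #(joined (R.erase x)) with hle | hgt
  · obtain ⟨y, hyW, hy⟩ := exists_mem_notMem_of_card_lt_card (hlt.trans_le hW)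
    refine ⟨joined (R.erase x), filter_subset _ _, hle, .inl ⟨y, hyW, R.erase x,
      (erase_subset x R).trans hRP, hxtree, ?_, fun w hw ↦ (mem_filter.1 hw).2⟩⟩
    by_contra! h
    exact hy (mem_filter.2 ⟨hyW, h⟩)
  · refine ⟨joined R \ joined (R.erase x), sdiff_subset.trans (filter_subset _ _), ?_,
      .inr ⟨x, hRP hx, fun w hw ↦ ?_⟩⟩
    · have := le_card_sdiff (joined (R.erase x)) (joined R)
      omega
    · simp only [joined, mem_sdiff, mem_filter] at hw
      by_contra h
      refine hw.2 ⟨hw.1.1, hw.1.2.trans_eq ?_⟩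
      rw [edgeCount_singleton_left, edgeCount_singleton_left, filter_erase,
        erase_eq_of_notMem (by simpa [hx] using fun h' ↦ h h'.symm)]

/-- `G` has a mutually cyclic family of `a` subsets of `W ∪ S`, each of which meets `W`. -/
def HasMutuallyCyclicMeeting [DecidableEq V] (G : SimpleGraph V) (W S : Finset V) (a : ℕ) : Prop :=
  ∃ D : Fin a → Finset V, IsMutuallyCyclic G D ∧ ∀ i, D i ⊆ W ∪ S ∧ ¬ Disjoint W (D i)

/-- `G` has a complete bipartite subgraph with `b` vertices in `S` on one side and `k` vertices
in `W` on the other. -/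
def HasBiclique (G : SimpleGraph V) (W S : Finset V) (b k : ℕ) : Prop :=
  ∃ X ⊆ S, ∃ W' ⊆ W, b ≤ #X ∧ k ≤ #W' ∧ ∀ x ∈ X, ∀ w ∈ W', G.Adj x w

lemma HasMutuallyCyclicMeeting.mono [DecidableEq V] (h : HasMutuallyCyclicMeeting G W' S' a)
    (hW : W' ⊆ W) (hS : S' ⊆ S) : HasMutuallyCyclicMeeting G W S a :=
  let ⟨D, hD, hDW⟩ := h
  ⟨D, hD, fun i ↦ ⟨(hDW i).1.trans (union_subset_union hW hS), mt (.mono_left hW) (hDW i).2⟩⟩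

lemma HasBiclique.mono (h : HasBiclique G W' S' b k) (hW : W' ⊆ W) (hS : S' ⊆ S) :
    HasBiclique G W S b k :=
  let ⟨X, hX, Y, hY, hXY⟩ := h
  ⟨X, hX.trans hS, Y, hY.trans hW, hXY⟩

lemma HasBiclique.succ (h : HasBiclique G W' S' b k) (hW : W' ⊆ W) (hS : S' ⊆ S) (hxS : x ∈ S)
    (hxS' : x ∉ S') (hxW' : ∀ w ∈ W', G.Adj x w) : HasBiclique G W S (b + 1) k := by
  classical
  obtain ⟨X, hX, Y, hY, hXcard, hYcard, hXY⟩ := h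
  refine ⟨insert x X, insert_subset hxS (hX.trans hS), Y, hY.trans hW, ?_, hYcard,
    forall_mem_insert _ _ _ |>.2 ⟨fun w hw ↦ hxW' w (hY hw), hXY⟩⟩
  rw [card_insert_of_notMem fun hxX ↦ hxS' (hX hxX)]
  exact Nat.add_le_add_right hXcard 1

lemma HasMutuallyCyclicMeeting.succ [DecidableEq V] (h : HasMutuallyCyclicMeeting G W' S' a)
    (hW : W' ⊆ W) (hS : S' ⊆ S) (hyW : y ∈ W) (hRS : R ⊆ S) (hWS : Disjoint W S)
    (hRS' : Disjoint R S') (hR : InducesTree G R) (hyR : edgeCount G {y} R ≤ 1)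
    (hW'R : ∀ w ∈ W', 2 ≤ edgeCount G {w} R) : HasMutuallyCyclicMeeting G W S (a + 1) := by
  obtain ⟨D, hD, hDW⟩ := h
  have hWR {w} (hw : w ∈ W) : Disjoint {w} R :=
    disjoint_singleton_left.2 fun hwR ↦ disjoint_left.1 hWS hw (hRS hwR)
  have hyW' : y ∉ W' := fun hy ↦ by have := hW'R y hy; omega
  have hdisj : Disjoint ({y} ∪ R) (W' ∪ S') := by
    simp only [disjoint_union_left, disjoint_union_right, disjoint_singleton_left]
    exact ⟨⟨hyW', (hWS.mono hW hRS).symm⟩, fun hyS' ↦ disjoint_left.1 hWS hyW (hS hyS'), hRS'⟩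
  refine ⟨Fin.cons ({y} ∪ R) D, hD.cons ?_ (fun i ↦ hdisj.mono_right (hDW i).1) fun i ↦ ?_,
    Fin.cases ⟨?_, ?_⟩ fun i ↦ ⟨(hDW i).1.trans (union_subset_union hW hS),
      mt (.mono_left hW) (hDW i).2⟩⟩
  · exact not_containsCycle_union (InducesTree.singleton G y).not_containsCycle
      hR.not_containsCycle (hWR hyW) hyR
  · obtain ⟨w, hwW', hwD⟩ := not_disjoint_iff.1 (hDW i).2
    refine ((InducesTree.singleton G w).containsCycle_union hR (hWR (hW hwW'))
      (hW'R w hwW')).mono ?_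
    grind
  · exact union_subset_union (singleton_subset_iff.2 hyW) hRS
  · exact not_disjoint_iff.2 ⟨y, hyW, mem_union_left R (mem_singleton_self y)⟩

/- Each tree of `𝒯` supplies either one more member of the family or one more vertex of the
biclique, at the cost of halving `W`. -/
theorem IsDoublyJoined.hasMutuallyCyclicMeeting_or_hasBiclique [DecidableEq V]
    (h : IsDoublyJoined G W 𝒯) (h𝒯 : a + b ≤ #𝒯) (hW : 2 ^ (a + b) * (k + 1) ≤ #W) :
    HasMutuallyCyclicMeeting G W (𝒯.biUnion id) a ∨ HasBiclique G W (𝒯.biUnion id) b k := by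
  induction a generalizing b W 𝒯 with
  | zero => exact .inl ⟨Fin.elim0, ⟨(·.elim0), fun i ↦ i.elim0, fun i ↦ i.elim0⟩, (·.elim0)⟩
  | succ a iha =>
  induction b generalizing W 𝒯 with
  | zero =>
    refine .inr ⟨∅, empty_subset _, W, Subset.rfl, Nat.zero_le _, ?_, by simp⟩
    exact (Nat.le_succ k).trans ((Nat.le_mul_of_pos_left _ (Nat.two_pow_pos _)).trans hW)
  | succ b ihb =>
  obtain ⟨P, hP⟩ : 𝒯.Nonempty := card_pos.1 (by omega)
  have hPS : P ⊆ 𝒯.biUnion id := subset_biUnion_of_mem id hP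
  have hPS' : Disjoint P ((𝒯.erase P).biUnion id) := (disjoint_biUnion_right _ _ _).2 fun Q hQ ↦
    h.pairwiseDisjoint hP (mem_of_mem_erase hQ) (ne_of_mem_erase hQ).symm
  have hS : (𝒯.erase P).biUnion id ⊆ 𝒯.biUnion id :=
    biUnion_subset_biUnion_of_subset_left id (erase_subset P 𝒯)
  have hcard : a + b + 1 ≤ #(𝒯.erase P) := by rw [card_erase_of_mem hP]; omega
  have hW₂ : 2 * (2 ^ (a + b + 1) * (k + 1)) ≤ #W := by
    rwa [← mul_assoc, ← pow_succ', show a + b + 1 + 1 = a + 1 + (b + 1) by omega]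
  obtain ⟨W', hW', hW'card, ⟨y, hyW, R, hRP, hR, hyR, hW'R⟩ | ⟨x, hxP, hxadj⟩⟩ :=
    exists_subtree_or_common_neighbour (by positivity) (h.inducesTree P hP) hW₂
      (h.two_le_edgeCount P hP)
  all_goals have h' := h.mono hW' (erase_subset P 𝒯)
  · exact (iha h' (b := b + 1) hcard hW'card).imp
      (·.succ hW' hS hyW (hRP.trans hPS) ((disjoint_biUnion_right _ _ _).2 h.disjoint)
        (hPS'.mono_left hRP) hR hyR hW'R)
      (·.mono hW' hS)
  · rw [add_right_comm a b 1] at hcard hW'card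
    exact (ihb h' hcard hW'card).imp (·.mono hW' hS)
      (·.succ hW' hS (hPS hxP) (disjoint_left.1 hPS' hxP) hxadj)

/-- The number of vertices and of trees that forces a mutually cyclic family of size `k` as soon
as every vertex has two neighbours in every tree. -/
def doublyJoinedBound (k : ℕ) : ℕ :=
  2 ^ (k + k) * (k + 1)

theorem hasMutuallyCyclic_of_two_le_edgeCount {ι κ : Type*} [Fintype ι] [Fintype κ] {v : ι → V}
    {P : κ → Finset V} (hP : ∀ j, InducesTree G (P j)) (hPP : Pairwise (Disjoint on P))
    (hv : Injective v) (hvP : ∀ i j, v i ∉ P j) (hedge : ∀ i j, 2 ≤ edgeCount G {v i} (P j))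
    (hι : doublyJoinedBound k ≤ Fintype.card ι) (hκ : doublyJoinedBound k ≤ Fintype.card κ) :
    HasMutuallyCyclic G k := by
  classical
  have hPinj : Injective P := injective_iff_pairwise_ne.2 fun i j hij ↦
    (hPP hij).ne (hP i).nonempty.ne_empty
  have hjoined : IsDoublyJoined G (univ.image v) (univ.image P) := by
    refine ⟨?_, ?_, ?_, ?_⟩
    · simpa using hP
    · rw [coe_image, coe_univ, Set.image_univ]
      rintro _ ⟨i, rfl⟩ _ ⟨j, rfl⟩ hij
      exact hPP (ne_of_apply_ne P hij)
    · simpa [disjoint_left] using fun i j ↦ hvP j i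
    · simpa using fun j i ↦ hedge i j
  have hk : k + k ≤ doublyJoinedBound k :=
    Nat.lt_two_pow_self.le.trans (Nat.le_mul_of_pos_right _ k.succ_pos)
  rcases hjoined.hasMutuallyCyclicMeeting_or_hasBiclique (a := k) (b := k) (k := k)
    (by rw [card_image_of_injective _ hPinj]; exact hk.trans hκ)
    (by rwa [card_image_of_injective _ hv]) with ⟨D, hD, -⟩ | ⟨X, -, W, -, hX, hW, hadj⟩
  · exact hD.hasMutuallyCyclic
  · exact hasMutuallyCyclic_of_biclique hX hW hadj

end DoublyJoined

section BrokenCycles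

variable {V : Type*} {G : SimpleGraph V} {ι κ : Type*} {P : ι → Finset V} {v : ι → V} {k : ℕ}

/-- The trees `P i` together with the vertices `v i`, all of them disjoint, where `v i` closes a
cycle with `P i`; a packing of cycles with one vertex `v i` split off each of them. -/
structure IsBrokenCycleFamily (G : SimpleGraph V) (P : ι → Finset V) (v : ι → V) : Prop where
  inducesTree : ∀ i, InducesTree G (P i)
  two_le_edgeCount : ∀ i, 2 ≤ edgeCount G {v i} (P i)
  disjoint : Pairwise (Disjoint on P)
  injective : Injective v
  notMem : ∀ i j, v i ∉ P j

/-- The number of broken cycles needed to find `q` of them such that no vertex `v i` is adjacent to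
a later tree `P j`, unless there is a mutually cyclic family of size `k`. -/
def crossBound (k q : ℕ) : ℕ :=
  ramseyBound (doublyJoinedBound k + doublyJoinedBound k) (k + k) q

namespace IsBrokenCycleFamily

lemma comp (h : IsBrokenCycleFamily G P v) {f : κ → ι} (hf : Injective f) :
    IsBrokenCycleFamily G (P ∘ f) (v ∘ f) where
  inducesTree i := h.inducesTree (f i)
  two_le_edgeCount i := h.two_le_edgeCount (f i)
  disjoint := h.disjoint.comp_of_injective hf
  injective := h.injective.comp hf
  notMem i j := h.notMem (f i) (f j)

lemma hasMutuallyCyclic_of_edgeCount_eq_one (h : IsBrokenCycleFamily G P v) {a b : Fin k → ι}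
    (ha : Injective a) (hb : Injective b) (hedge : ∀ i j, edgeCount G {v (a i)} (P (b j)) = 1) :
    HasMutuallyCyclic G k := by
  classical
  refine (isMutuallyCyclic_union_of_edgeCount_eq_one (X := fun i ↦ {v (a i)}) (Y := P ∘ b)
    (fun i ↦ .singleton G _) (fun j ↦ h.inducesTree (b j)) (fun i j hij ↦ ?_)
    (h.disjoint.comp_of_injective hb) (fun i j ↦ disjoint_singleton_left.2 (h.notMem (a i) (b j)))
    hedge).hasMutuallyCyclic
  exact disjoint_singleton.2 ((h.injective.comp ha).ne hij)

lemma hasMutuallyCyclic_or_exists_orderEmbedding {q n : ℕ} (hn : crossBound k q ≤ n)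
    {P : Fin n → Finset V} {v : Fin n → V} (h : IsBrokenCycleFamily G P v) :
    HasMutuallyCyclic G k ∨
      ∃ e : Fin q ↪o Fin n, ∀ i j, i < j → edgeCount G {v (e i)} (P (e j)) = 0 := by
  have hinj₁ {m} (e : Fin (m + m) ↪o Fin n) : Injective fun i ↦ e (Fin.castAdd m i) :=
    e.injective.comp (Fin.castAdd_injective m m)
  have hinj₂ {m} (e : Fin (m + m) ↪o Fin n) : Injective fun i ↦ e (Fin.natAdd m i) :=
    e.injective.comp (Fin.natAdd_injective m m)
  rcases exists_orderEmbedding_two_le_or_eq_one_or_eq_zero hn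
    fun i j ↦ edgeCount G {v i} (P j) with ⟨e, he⟩ | ⟨e, he⟩ | hzero
  · exact .inl (hasMutuallyCyclic_of_two_le_edgeCount (h.comp (hinj₂ e)).inducesTree
      (h.comp (hinj₂ e)).disjoint (h.comp (hinj₁ e)).injective (fun i j ↦ h.notMem _ _)
      (fun i j ↦ he _ _ (castAdd_lt_natAdd i j)) (Fintype.card_fin _).ge (Fintype.card_fin _).ge)
  · exact .inl (h.hasMutuallyCyclic_of_edgeCount_eq_one (hinj₁ e) (hinj₂ e)
      fun i j ↦ he _ _ (castAdd_lt_natAdd i j))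
  · exact .inr hzero

/- The second application, to the reversed subfamily, takes care of the pairs `j < i`. -/
lemma hasMutuallyCyclic_or_exists_embedding {q n : ℕ} (hn : crossBound k (crossBound k q) ≤ n)
    {P : Fin n → Finset V} {v : Fin n → V} (h : IsBrokenCycleFamily G P v) :
    HasMutuallyCyclic G k ∨
      ∃ e : Fin q ↪ Fin n, Pairwise fun i j ↦ edgeCount G {v (e i)} (P (e j)) = 0 := by
  refine or_iff_not_imp_left.2 fun hk ↦ ?_
  obtain ⟨e, he⟩ := (h.hasMutuallyCyclic_or_exists_orderEmbedding hn).resolve_left hk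
  obtain ⟨f, hf⟩ := ((h.comp (e.injective.comp Fin.rev_injective)
    ).hasMutuallyCyclic_or_exists_orderEmbedding le_rfl).resolve_left hk
  refine ⟨(f.toEmbedding.trans Fin.revPerm.toEmbedding).trans e.toEmbedding, fun i j hij ↦ ?_⟩
  rcases hij.lt_or_gt with hlt | hgt
  · exact hf i j hlt
  · exact he _ _ (Fin.rev_lt_rev.2 (f.strictMono hgt))

end IsBrokenCycleFamily

section PairIndexed

/-- The part of the colour class `i` that comes from the broken cycle of the pair of colours
`{i, t}`: the tree goes to the smaller colour and the vertex to the larger one. -/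
def brokenCyclePart [LT ι] [DecidableLT ι] (P : ι × ι → Finset V) (v : ι × ι → V)
    (i t : ι) : Finset V :=
  if i < t then P (i, t) else if t < i then {v (t, i)} else ∅

variable [LinearOrder ι] {P : ι × ι → Finset V} {v : ι × ι → V}

lemma IsBrokenCycleFamily.disjoint_brokenCyclePart (h : IsBrokenCycleFamily G P v) {i t j u : ι}
    (hne : i ≠ j ∨ t ≠ u) : Disjoint (brokenCyclePart P v i t) (brokenCyclePart P v j u) := by
  unfold brokenCyclePart
  split_ifs
  · exact h.disjoint (by grind)
  · exact disjoint_singleton_right.2 (h.notMem _ _)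
  · exact disjoint_empty_right _
  · exact disjoint_singleton_left.2 (h.notMem _ _)
  · exact disjoint_singleton.2 (h.injective.ne (by grind))
  all_goals simp

lemma IsBrokenCycleFamily.not_containsCycle_brokenCyclePart (h : IsBrokenCycleFamily G P v)
    (i t : ι) : ¬ ContainsCycle G (brokenCyclePart P v i t) := by
  unfold brokenCyclePart
  split_ifs
  · exact (h.inducesTree _).not_containsCycle
  · exact (InducesTree.singleton G _).not_containsCycle
  · exact not_containsCycle_empty G

lemma edgeCount_brokenCyclePart (hPP : Pairwise fun i j ↦ edgeCount G (P i) (P j) = 0)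
    (hvv : Pairwise fun i j ↦ edgeCount G {v i} {v j} = 0)
    (hvP : Pairwise fun i j ↦ edgeCount G {v i} (P j) = 0) {i t u : ι} (htu : t ≠ u) :
    edgeCount G (brokenCyclePart P v i t) (brokenCyclePart P v i u) = 0 := by
  unfold brokenCyclePart
  split_ifs
  · exact hPP (by grind)
  · exact (edgeCount_comm G _ _).trans (hvP (by grind))
  · simp [edgeCount, SimpleGraph.interedges, Rel.interedges]
  · exact hvP (by grind)
  · exact hvv (by grind)
  all_goals simp [edgeCount, SimpleGraph.interedges, Rel.interedges]

lemma IsBrokenCycleFamily.isMutuallyCyclic_biUnion [DecidableEq V] [Fintype ι]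
    (h : IsBrokenCycleFamily G P v)
    (hPP : Pairwise fun i j ↦ edgeCount G (P i) (P j) = 0)
    (hvv : Pairwise fun i j ↦ edgeCount G {v i} {v j} = 0)
    (hvP : Pairwise fun i j ↦ edgeCount G {v i} (P j) = 0) :
    IsMutuallyCyclic G fun i ↦ univ.biUnion (brokenCyclePart P v i) where
  not_containsCycle i := not_containsCycle_biUnion
    (fun t _ ↦ h.not_containsCycle_brokenCyclePart i t)
    (fun _ _ _ _ htu ↦ h.disjoint_brokenCyclePart (.inr htu))
    fun _ _ _ _ htu ↦ edgeCount_brokenCyclePart hPP hvv hvP htu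
  disjoint i j hij := (disjoint_biUnion_left _ _ _).2 fun _ _ ↦
    (disjoint_biUnion_right _ _ _).2 fun _ _ ↦ h.disjoint_brokenCyclePart (.inl hij)
  containsCycle := by
    have hlt {i j : ι} (hij : i < j) : ContainsCycle G
        (univ.biUnion (brokenCyclePart P v i) ∪ univ.biUnion (brokenCyclePart P v j)) := by
      have hcycle := (h.inducesTree (i, j)).containsCycle_union (InducesTree.singleton G (v (i, j)))
        (disjoint_singleton_right.2 (h.notMem _ _))
        ((h.two_le_edgeCount (i, j)).trans_eq (edgeCount_comm G _ _))
      rw [show P (i, j) = brokenCyclePart P v i j by simp [brokenCyclePart, hij],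
        show {v (i, j)} = brokenCyclePart P v j i by simp [brokenCyclePart, hij, hij.not_gt]]
        at hcycle
      exact hcycle.mono (union_subset_union (subset_biUnion_of_mem _ (mem_univ j))
        (subset_biUnion_of_mem _ (mem_univ i)))
    intro i j hij
    rcases hij.lt_or_gt with h | h
    · exact hlt h
    · exact union_comm (univ.biUnion (brokenCyclePart P v i)) _ ▸ hlt h

end PairIndexed

/-- The number of disjoint cycles that forces a mutually cyclic family of size `k`. -/
def packingBound (k : ℕ) : ℕ :=
  ramseyBound k (k + k) (ramseyBound k (k + k) (crossBound k (crossBound k (k * k))))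

lemma IsBrokenCycleFamily.hasMutuallyCyclic {P : Fin (packingBound k) → Finset V}
    {v : Fin (packingBound k) → V} (h : IsBrokenCycleFamily G P v) : HasMutuallyCyclic G k := by
  classical
  by_contra hk
  obtain ⟨e, he⟩ := (hasMutuallyCyclic_or_exists_embedding_edgeCount_eq_zero le_rfl h.inducesTree
    h.disjoint).resolve_left hk
  have h₁ := h.comp e.injective
  obtain ⟨f, hf⟩ := (hasMutuallyCyclic_or_exists_embedding_edgeCount_eq_zero le_rfl
    (fun i ↦ InducesTree.singleton G ((v ∘ e) i))
    fun i j hij ↦ disjoint_singleton.2 (h₁.injective.ne hij)).resolve_left hk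
  have h₂ := h₁.comp f.injective
  obtain ⟨g, hg⟩ := (h₂.hasMutuallyCyclic_or_exists_embedding le_rfl).resolve_left hk
  have hprod := finProdFinEquiv (m := k) (n := k) |>.injective
  have h₃ := (h₂.comp g.injective).comp hprod
  exact hk (h₃.isMutuallyCyclic_biUnion
    (he.comp_of_injective (f.injective.comp (g.injective.comp hprod)))
    (hf.comp_of_injective (g.injective.comp hprod))
    (hg.comp_of_injective hprod)).hasMutuallyCyclic

lemma ContainsCycle.exists_inducesTree {S : Finset V} (hS : ContainsCycle G S) :
    ∃ (P : Finset V) (v : V), P ⊆ S ∧ v ∈ S ∧ v ∉ P ∧ InducesTree G P ∧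
      2 ≤ edgeCount G {v} P := by
  classical
  obtain ⟨C, hCS, hC⟩ := hS.exists_minimal_subset
  obtain ⟨v, hv⟩ := (nonempty_and_excess_nonneg_of_minimal hC).1
  refine ⟨C.erase v, v, (erase_subset v C).trans hCS, hCS hv, notMem_erase v C,
    ⟨hC.not_prop_of_lt (erase_ssubset hv), ?_⟩, ?_⟩
  · rw [excess_erase hv, excess_eq_zero_of_minimal hC, edgeCount_eq_two_of_minimal hC hv]
    norm_num
  · rw [edgeCount_singleton_erase_self, edgeCount_eq_two_of_minimal hC hv]

theorem HasCyclePacking.hasMutuallyCyclic {S : Finset V}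
    (h : HasCyclePacking G (packingBound k) S) : HasMutuallyCyclic G k := by
  classical
  obtain ⟨C, hC, hdisj⟩ := h
  choose P v hPC hvC hvP hP hedge using fun i ↦ (hC i).2.exists_inducesTree
  refine IsBrokenCycleFamily.hasMutuallyCyclic (P := P) (v := v) ⟨hP, hedge,
    fun i j hij ↦ (hdisj hij).mono (hPC i) (hPC j), fun i j hij ↦ ?_, fun i j hij ↦ ?_⟩
  · by_contra hne
    exact disjoint_left.1 (hdisj hne) (hvC i) (hij ▸ hvC j)
  · obtain rfl | hne := eq_or_ne i j
    · exact hvP i hij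
    · exact disjoint_left.1 (hdisj hne) (hvC i) (hPC j hij)

end BrokenCycles

section CompleteColoring

variable {V : Type*} {G : SimpleGraph V} {r : Setoid V} {k : ℕ}

/-- The partition of the vertices into the classes of `r` is an arboreal colouring. Colourings are
encoded as equivalence relations so that merging colours is going up in a lattice. -/
def IsArborealSetoid (G : SimpleGraph V) (r : Setoid V) : Prop :=
  ∀ x, (G.induce {z | r z x}).IsAcyclic

lemma not_isAcyclic_induce_union_of_maximal (hr : Maximal (IsArborealSetoid G) r) {x y : V}
    (hxy : ¬ r x y) : ¬ (G.induce ({z | r z x} ∪ {z | r z y})).IsAcyclic := by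
  classical
  intro hacyclic
  let merge (z : V) : Quotient r := if r z y then ⟦x⟧ else ⟦z⟧
  have hle : r ≤ Setoid.ker merge := fun z w hzw ↦ by
    have hiff : r z y ↔ r w y := ⟨r.trans (r.symm hzw), r.trans hzw⟩
    simp only [Setoid.ker_def, merge, hiff, Quotient.sound hzw]
  have hmerge : Setoid.ker merge x y := by
    simp only [Setoid.ker_def, merge, hxy, r.refl y, if_true, if_false]
  refine hxy (hr.le_of_ge (fun w ↦ ?_) hle hmerge)
  by_cases hw : merge w = ⟦x⟧
  · refine isAcyclic_induce_mono hacyclic fun z (hz : merge z = merge w) ↦ ?_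
    by_cases hzy : r z y
    · exact .inr hzy
    · exact .inl (Quotient.exact ((if_neg hzy).symm.trans (hz.trans hw)))
  · have hwy : ¬ r w y := fun hwy ↦ hw (if_pos hwy)
    refine isAcyclic_induce_mono (hr.prop w) fun z (hz : merge z = merge w) ↦ ?_
    have hzy : ¬ r z y := fun hzy ↦ hw (hz.symm.trans (if_pos hzy))
    exact Quotient.exact ((if_neg hzy).symm.trans (hz.trans (if_neg hwy)))

lemma le_avertexArboricity_of_isCompleteArborealColoring [Finite V] {c : V → Fin k}
    (hc : IsCompleteArborealColoring G c) : k ≤ avertexArboricity G := by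
  refine le_csSup ⟨Nat.card V, ?_⟩ ⟨c, hc⟩
  rintro n ⟨d, hd, -⟩
  simpa using Nat.card_le_card_of_surjective d hd

lemma card_quotient_le_avertexArboricity [Finite V] (hr : Maximal (IsArborealSetoid G) r) :
    Nat.card (Quotient r) ≤ avertexArboricity G := by
  let c : V → Fin (Nat.card (Quotient r)) := Finite.equivFin (Quotient r) ∘ Quotient.mk r
  have hc : Surjective c := (Finite.equivFin _).surjective.comp Quotient.mk_surjective
  have hclass (x : V) : c ⁻¹' {c x} = {z | r z x} := by
    ext z
    exact (Finite.equivFin _).apply_eq_iff_eq.trans Quotient.eq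
  refine le_avertexArboricity_of_isCompleteArborealColoring (c := c)
    ⟨hc, fun i ↦ ?_, fun i j ↦ ?_⟩
  · obtain ⟨x, rfl⟩ := hc i
    exact hclass x ▸ hr.prop x
  · obtain ⟨x, rfl⟩ := hc i
    obtain ⟨y, rfl⟩ := hc j
    intro hij
    rw [hclass, hclass]
    refine not_isAcyclic_induce_union_of_maximal hr fun hxy ↦ hij ?_
    exact congrArg (Finite.equivFin _) (Quotient.sound hxy)

/-- The equivalence relation whose classes are the members of a disjoint family `D` and the
singletons outside of them. -/
def familySetoid {ι : Type*} (D : ι → Finset V) (hD : Pairwise (Disjoint on D)) : Setoid V where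
  r x y := x = y ∨ ∃ i, x ∈ D i ∧ y ∈ D i
  iseqv.refl _ := .inl rfl
  iseqv.symm := by
    rintro x y (rfl | ⟨i, hx, hy⟩)
    · exact .inl rfl
    · exact .inr ⟨i, hy, hx⟩
  iseqv.trans := by
    rintro x y z (rfl | ⟨i, hx, hy⟩) (rfl | ⟨j, hy', hz⟩)
    · exact .inl rfl
    · exact .inr ⟨j, hy', hz⟩
    · exact .inr ⟨i, hx, hy⟩
    · obtain rfl : i = j := hD.eq (not_disjoint_iff.2 ⟨y, hy, hy'⟩)
      exact .inr ⟨i, hx, hz⟩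

section

variable [DecidableEq V] {ι : Type*} {D : ι → Finset V}

lemma IsMutuallyCyclic.isArborealSetoid_familySetoid (hD : IsMutuallyCyclic G D) :
    IsArborealSetoid G (familySetoid D hD.disjoint) := by
  intro x
  by_cases hx : ∃ i, x ∈ D i
  · obtain ⟨i, hi⟩ := hx
    refine isAcyclic_induce_mono (not_not.1 (hD.not_containsCycle i)) ?_
    rintro z (rfl | ⟨j, hz, hj⟩)
    · exact hi
    · exact hD.disjoint.eq (not_disjoint_iff.2 ⟨x, hj, hi⟩) ▸ hz
  · refine isAcyclic_induce_mono (not_not.1 (InducesTree.singleton G x).not_containsCycle) ?_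
    rintro z (rfl | ⟨j, -, hj⟩)
    · exact mem_singleton_self z
    · exact (hx ⟨j, hj⟩).elim

lemma IsMutuallyCyclic.nonempty [Nontrivial ι] (hD : IsMutuallyCyclic G D) (i : ι) :
    (D i).Nonempty := by
  rw [nonempty_iff_ne_empty]
  intro hi
  obtain ⟨j, hj⟩ := exists_ne i
  have hcycle : ContainsCycle G (D j ∪ D i) := hD.containsCycle hj
  rw [hi, union_empty] at hcycle
  exact hD.not_containsCycle j hcycle

lemma IsMutuallyCyclic.card_le_card_quotient [Finite V] [Nontrivial ι] (hD : IsMutuallyCyclic G D)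
    (hr : IsArborealSetoid G r) (hle : familySetoid D hD.disjoint ≤ r) :
    Nat.card ι ≤ Nat.card (Quotient r) := by
  choose x hx using hD.nonempty
  refine Nat.card_le_card_of_injective (fun i ↦ (⟦x i⟧ : Quotient r)) fun i j hij ↦ ?_
  by_contra hne
  refine hD.containsCycle hne (isAcyclic_induce_mono (hr (x j)) fun z hz ↦ ?_)
  rcases mem_union.1 hz with hz | hz
  · exact r.trans (hle (.inr ⟨i, hz, hx i⟩)) (Quotient.exact hij)
  · exact hle (.inr ⟨j, hz, hx j⟩)

end

theorem HasMutuallyCyclic.le_avertexArboricity [Finite V] (h : HasMutuallyCyclic G k)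
    (hk : 2 ≤ k) : k ≤ avertexArboricity G := by
  classical
  obtain ⟨D, hD⟩ := h
  have : Nontrivial (Fin k) := Fin.nontrivial_iff_two_le.2 hk
  have : Finite (Setoid V) :=
    .of_injective (fun r : Setoid V ↦ r.r) fun r s hrs ↦ Setoid.ext fun x y ↦ by
      exact iff_of_eq (congr_fun₂ hrs x y)
  obtain ⟨r, hle, hr⟩ := Finite.exists_le_maximal hD.isArborealSetoid_familySetoid
  calc k = Nat.card (Fin k) := (Nat.card_fin k).symm
    _ ≤ Nat.card (Quotient r) := hD.card_le_card_quotient hr.prop hle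
    _ ≤ avertexArboricity G := card_quotient_le_avertexArboricity hr

end CompleteColoring

end ArborealColoring

/-- there is a function `f : ℕ → ℕ` such that `τ(G) ≤ f(ava(G))` for every
finite simple graph `G`. -/
theorem fvs_bounded_by_ava :
    ∃ f : ℕ → ℕ, ∀ (V : Type) [Fintype V] (G : SimpleGraph V),
      graphFVSNumber G ≤ f (avertexArboricity G) := by
  classical
  refine ⟨fun a ↦ ArborealColoring.erdosPosaBound (ArborealColoring.packingBound (a + 2)),
    fun V _ G ↦ ?_⟩
  obtain hpacking | ⟨X, hX, hacyclic⟩ := ArborealColoring.erdos_posa G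
    (ArborealColoring.packingBound (avertexArboricity G + 2))
  · have := hpacking.hasMutuallyCyclic.le_avertexArboricity (by omega)
    omega
  · have hfvs : (G.induce (X : Set V)ᶜ).IsAcyclic := by
      rw [← Finset.coe_compl]
      exact not_not.1 hacyclic
    have hle : graphFVSNumber G ≤ X.card := Nat.sInf_le ⟨X, rfl, hfvs⟩
    exact hle.trans hX
end

section
/- There exists a function h₂ : ℕ → ℕ such that for every finite simple graph G, ava(G) ≤ h₂(M), where M is the maximum of adi(D) over all orientations D of G (digraphs obtained from G by assigning to each edge exactly one of its two possible directions). -/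
open Function

/-!
Suppose `G` has a complete arboreal coloring with at least `m * (m - 1)` colors. Merging its
classes in groups of at least two partitions the vertices into `m.choose 2` parts, one for each
pair of colors in `Fin m`, and every part contains a cycle. In each part `p` choose an edge
`{x p, y p}` on a cycle, and order the vertices by their distance from the `x` of their part in
the graph of unchosen edges inside the parts, breaking ties arbitrarily. Orient every edge of `G`
upwards, except the chosen edges, which are oriented downwards. A shortest path from `x p` to
`y p` closes up to a directed cycle inside the part `p`, while a vertex set that contains no
chosen edge is acyclic. If `p` stands for the pair `{i, j}`, color `x p` with `i` and the rest of
the part with `j`: no chosen edge is monochromatic, and the colors `i` and `j` together cover the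
part `p`, so this is a complete acyclic coloring with `m` colors.
-/

theorem HasDicycle.mono {V : Type*} {D : V → V → Prop} {S T : Set V} (hST : S ⊆ T)
    (hS : HasDicycle D S) : HasDicycle D T :=
  hS.imp fun v => Relation.TransGen.mono (fun _ _ h => ⟨hST h.1, hST h.2.1, h.2.2⟩) v v

theorem exists_linearOrder_lt_of_lt {V β : Type*} [LinearOrder β] (d : V → β) :
    ∃ _ : LinearOrder V, ∀ u v, d u < d v → u < v := by
  classical
  let _ : LinearOrder V := linearOrderOfSTO WellOrderingRel
  have hinj : Injective fun u => toLex (d u, u) :=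
    fun u v h => (Prod.ext_iff.1 (toLex.injective h)).2
  exact ⟨LinearOrder.lift' _ hinj, fun u v h => Prod.Lex.toLex_lt_toLex.2 (.inl h)⟩

section OrderOrientation

variable {V : Type*} {G : SimpleGraph V} {F : Set (Sym2 V)}

/-- The digraph obtained from `G` by directing each edge towards its larger end, except that the
edges in `F` are directed towards their smaller end. It is used to make each edge in `F` close a
directed cycle. The set `F` may contain pairs that are not edges of `G`. -/
def orderOrientation [LT V] (G : SimpleGraph V) (F : Set (Sym2 V)) (u v : V) : Prop :=
  G.Adj u v ∧ (u < v ↔ s(u, v) ∉ F)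

theorem isOrientation_orderOrientation [LinearOrder V] :
    IsOrientation G (orderOrientation G F) := by
  refine ⟨fun _ _ h => h.1, fun u v huv => ?_⟩
  have hlt : v < u ↔ ¬ u < v := by rw [not_lt, huv.ne'.le_iff_lt]
  simp only [orderOrientation, huv, huv.symm, true_and, hlt, Sym2.eq_swap (a := v) (b := u)]
  tauto

theorem not_hasDicycle_orderOrientation [Preorder V] {T : Set V}
    (hT : ∀ u ∈ T, ∀ v ∈ T, s(u, v) ∉ F) : ¬ HasDicycle (orderOrientation G F) T := by
  rintro ⟨v, hv⟩
  have hlt : Relation.TransGen (· < ·) v v :=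
    Relation.TransGen.mono (fun a b ⟨ha, hb, hab⟩ => hab.2.2 (hT a ha b hb)) v v hv
  rw [Relation.transGen_eq_self] at hlt
  exact lt_irrefl v hlt

theorem hasDicycle_orderOrientation_of_reflTransGen [Preorder V] {S : Set V} {x y : V}
    (hx : x ∈ S) (hy : y ∈ S) (hxy : G.Adj x y) (hF : s(x, y) ∈ F) (hlt : x < y)
    (hpath : Relation.ReflTransGen
      (fun a b => a ∈ S ∧ b ∈ S ∧ G.Adj a b ∧ s(a, b) ∉ F ∧ a < b) x y) :
    HasDicycle (orderOrientation G F) S := by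
  have hback : orderOrientation G F y x :=
    ⟨hxy.symm, iff_of_false hlt.not_gt (not_not.2 (Sym2.eq_swap ▸ hF))⟩
  refine ⟨x, .tail' (Relation.ReflTransGen.mono ?_ _ _ hpath) ⟨hy, hx, hback⟩⟩
  rintro a b ⟨ha, hb, hG, hnF, hab⟩
  exact ⟨ha, hb, hG, iff_of_true hab hnF⟩

end OrderOrientation

theorem reflTransGen_adj_dist_lt_of_reachable {V : Type*} {H : SimpleGraph V} {x u : V}
    (hu : H.Reachable x u) :
    Relation.ReflTransGen (fun a b => H.Adj a b ∧ H.dist x a < H.dist x b) x u := by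
  induction hn : H.dist x u using Nat.strong_induction_on generalizing u with
  | _ n ih =>
    obtain ⟨w, hw⟩ := hu.exists_walk_length_eq_dist
    by_cases hnil : w.Nil
    · rw [hnil.eq]
    · have hlt : H.dist x w.penultimate < H.dist x u := by
        have := SimpleGraph.dist_le w.dropLast
        have := SimpleGraph.Walk.length_dropLast_add_one hnil
        omega
      exact (ih _ (hn ▸ hlt) w.dropLast.reachable rfl).tail ⟨w.adj_penultimate hnil, hlt⟩

section Fibers

variable {V κ : Type*} {G : SimpleGraph V} {t : V → κ}

/-- The spanning subgraph of `G` whose edges are those joining vertices in a common part of the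
partition of the vertices into the fibers of `t`. Walks in it stay inside a part, so distances
in it (with some edges deleted) order the vertices of all parts at once. -/
def fiberGraph (G : SimpleGraph V) (t : V → κ) : SimpleGraph V where
  Adj u v := G.Adj u v ∧ t u = t v
  symm := ⟨fun _ _ h => ⟨h.1.symm, h.2.symm⟩⟩
  loopless := ⟨fun _ h => h.1.ne rfl⟩

theorem exists_adj_reachable_fiberGraph_deleteEdges
    (ht : ∀ p, ¬ (G.induce (t ⁻¹' {p})).IsAcyclic) :
    ∃ x y : κ → V, (∀ p, t (x p) = p) ∧ (∀ p, t (y p) = p) ∧ (∀ p, G.Adj (x p) (y p)) ∧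
      ∀ p, ((fiberGraph G t).deleteEdges (Set.range fun q => s(x q, y q))).Reachable
        (x p) (y p) := by
  simp only [SimpleGraph.isAcyclic_iff_forall_adj_isBridge, SimpleGraph.isBridge_iff, not_forall,
    not_not] at ht
  choose x y hxy hreach using ht
  refine ⟨fun p => x p, fun p => y p, fun p => (x p).2, fun p => (y p).2, hxy, fun p => ?_⟩
  refine (hreach p).map ⟨Subtype.val, fun {a b} hab => ?_⟩
  rw [SimpleGraph.deleteEdges_adj] at hab ⊢
  refine ⟨⟨hab.1, a.2.trans b.2.symm⟩, ?_⟩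
  rintro ⟨q, hq⟩
  obtain rfl : p = q := by
    have ha : (a : V) ∈ s((x q : V), (y q : V)) := by
      rw [show s((x q : V), (y q : V)) = s((a : V), (b : V)) from hq]
      exact Sym2.mem_mk_left _ _
    rcases Sym2.mem_iff.1 ha with hax | hay
    · exact a.2.symm.trans (hax ▸ (x q).2)
    · exact a.2.symm.trans (hay ▸ (y q).2)
  exact hab.2 (Sym2.map.injective Subtype.val_injective hq.symm)

theorem reflTransGen_fiber_of_reachable {F : Set (Sym2 V)} {x y : V}
    (hxy : ((fiberGraph G t).deleteEdges F).Reachable x y) :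
    Relation.ReflTransGen (fun a b => t a = t x ∧ t b = t x ∧ G.Adj a b ∧ s(a, b) ∉ F ∧
      ((fiberGraph G t).deleteEdges F).dist x a < ((fiberGraph G t).deleteEdges F).dist x b)
      x y := by
  suffices h : t y = t x ∧ Relation.ReflTransGen _ x y from h.2
  have hpath := reflTransGen_adj_dist_lt_of_reachable hxy
  clear hxy
  induction hpath with
  | refl => exact ⟨rfl, .refl⟩
  | @tail a b _ hab ih =>
    obtain ⟨hadj, hlt⟩ := hab
    obtain ⟨⟨hG, htab⟩, hF⟩ := SimpleGraph.deleteEdges_adj.1 hadj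
    have hb : t b = t x := htab.symm.trans ih.1
    exact ⟨hb, ih.2.tail ⟨ih.1, hb, hG, hF, hlt⟩⟩

theorem exists_isOrientation_hasDicycle_fibers (ht : ∀ p, ¬ (G.induce (t ⁻¹' {p})).IsAcyclic) :
    ∃ (D : V → V → Prop) (x y : κ → V), IsOrientation G D ∧
      (∀ p, t (x p) = p) ∧ (∀ p, t (y p) = p) ∧ (∀ p, x p ≠ y p) ∧
      (∀ p, HasDicycle D (t ⁻¹' {p})) ∧
      ∀ T : Set V, (∀ p, x p ∈ T → y p ∉ T) → ¬ HasDicycle D T := by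
  obtain ⟨x, y, hx, hy, hxy, hreach⟩ := exists_adj_reachable_fiberGraph_deleteEdges ht
  set F := Set.range fun p => s(x p, y p)
  obtain ⟨_, hlt⟩ := exists_linearOrder_lt_of_lt
    fun u => ((fiberGraph G t).deleteEdges F).dist (x (t u)) u
  refine ⟨orderOrientation G F, x, y, isOrientation_orderOrientation, hx, hy,
    fun p => (hxy p).ne, fun p => ?_, fun T hT => not_hasDicycle_orderOrientation ?_⟩
  · refine hasDicycle_orderOrientation_of_reflTransGen (hx p) (hy p) (hxy p) ⟨p, rfl⟩
      (hlt _ _ ?_) (Relation.ReflTransGen.mono ?_ _ _ (reflTransGen_fiber_of_reachable (hreach p)))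
    · simpa only [hx, hy, SimpleGraph.dist_self] using (hreach p).pos_dist_of_ne (hxy p).ne
    · rintro a b ⟨ha, hb, hG, hF, hdist⟩
      rw [hx] at ha hb
      exact ⟨ha, hb, hG, hF, hlt _ _ (by rwa [ha, hb])⟩
  · rintro u hu v hv ⟨p, hp⟩
    rcases Sym2.eq_iff.1 hp with ⟨rfl, rfl⟩ | ⟨rfl, rfl⟩
    · exact hT p hu hv
    · exact hT p hv hu

theorem exists_isOrientation_isCompleteAcyclicColoring {m : ℕ} (hm : 2 ≤ m) {a b : κ → Fin m}
    (hne : ∀ p, a p ≠ b p) (hpair : ∀ i j, i ≠ j → ∃ p, s(a p, b p) = s(i, j))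
    (ht : ∀ p, ¬ (G.induce (t ⁻¹' {p})).IsAcyclic) :
    ∃ (D : V → V → Prop) (c : V → Fin m), IsOrientation G D ∧ IsCompleteAcyclicColoring D c := by
  classical
  obtain ⟨D, x, y, hD, hx, hy, hxy, hcyclic, hacyclic⟩ := exists_isOrientation_hasDicycle_fibers ht
  let c : V → Fin m := fun v => if v = x (t v) then a (t v) else b (t v)
  have hcx (p) : c (x p) = a p := by simp only [c, hx, if_true]
  have hcy (p) : c (y p) = b p := by simp only [c, hy, if_neg (hxy p).symm]
  have hc (v) : c v ∈ s(a (t v), b (t v)) := Sym2.mem_iff.2 (ite_eq_or_eq _ _ _)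
  refine ⟨D, c, hD, fun i => ?_, fun i => hacyclic _ fun p hxi hyi => ?_, fun i j hij => ?_⟩
  · have : Nontrivial (Fin m) := Fin.nontrivial_iff_two_le.2 hm
    obtain ⟨j, hj⟩ := exists_ne i
    obtain ⟨p, hp⟩ := hpair i j hj.symm
    rcases Sym2.mem_iff.1 (hp ▸ Sym2.mem_mk_left i j) with hi | hi
    · exact ⟨x p, (hcx p).trans hi.symm⟩
    · exact ⟨y p, (hcy p).trans hi.symm⟩
  · exact hne p ((hcx p).symm.trans (hxi.trans (hyi.symm.trans (hcy p))))
  · obtain ⟨p, hp⟩ := hpair i j hij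
    refine (hcyclic p).mono ?_
    rintro v rfl
    exact Sym2.mem_iff.1 (hp ▸ hc v)

end Fibers

section PairwiseCyclic

variable {V ι : Type*} [Fintype ι] {G : SimpleGraph V} {c : V → ι}

theorem exists_fibers_not_isAcyclic_of_card_le {κ : Type*} [Fintype κ] [Nonempty κ]
    (hc : ∀ i j, i ≠ j → ¬ (G.induce (c ⁻¹' {i} ∪ c ⁻¹' {j})).IsAcyclic)
    (hcard : Fintype.card κ * 2 ≤ Fintype.card ι) :
    ∃ t : V → κ, ∀ p, ¬ (G.induce (t ⁻¹' {p})).IsAcyclic := by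
  obtain ⟨f⟩ : Nonempty (κ × Bool ↪ ι) := Embedding.nonempty_of_card_le <| by
    rwa [Fintype.card_prod, Fintype.card_bool]
  have hf (p b) : (invFun f (f (p, b))).1 = p := by rw [leftInverse_invFun f.injective]
  refine ⟨fun v => (invFun f (c v)).1, fun p hp => ?_⟩
  refine hc (f (p, true)) (f (p, false)) (f.injective.ne (by simp)) ?_
  refine hp.embedding (G.induceHomOfLE ?_)
  rintro v (hv | hv)
  all_goals
    rw [Set.mem_preimage, Set.mem_singleton_iff] at hv ⊢
    rw [hv, hf]

theorem exists_isOrientation_isCompleteAcyclicColoring_of_card_le {m : ℕ} (hm : 2 ≤ m)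
    (hc : ∀ i j, i ≠ j → ¬ (G.induce (c ⁻¹' {i} ∪ c ⁻¹' {j})).IsAcyclic)
    (hcard : m * (m - 1) ≤ Fintype.card ι) :
    ∃ (D : V → V → Prop) (c' : V → Fin m),
      IsOrientation G D ∧ IsCompleteAcyclicColoring D c' := by
  let κ := {e : Sym2 (Fin m) // ¬ e.IsDiag}
  have : Nonempty κ := ⟨s(⟨0, by omega⟩, ⟨1, hm⟩), by simp⟩
  have hκ : Fintype.card κ * 2 = m * (m - 1) := by
    rw [Sym2.card_subtype_not_diag, Fintype.card_fin, Nat.choose_two_right,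
      Nat.div_mul_cancel (Nat.even_mul_pred_self m).two_dvd]
  obtain ⟨t, ht⟩ := exists_fibers_not_isAcyclic_of_card_le (κ := κ) hc (hκ.trans_le hcard)
  choose e he using fun p : κ => Sym2.mk_surjective p.1
  have he' (p : κ) : s((e p).1, (e p).2) = p.1 := he p
  exact exists_isOrientation_isCompleteAcyclicColoring hm
    (fun p h => p.2 (he' p ▸ Sym2.mk_isDiag_iff.2 h))
    (fun i j hij => ⟨⟨s(i, j), Sym2.mk_isDiag_iff.not.2 hij⟩, he' _⟩) ht

end PairwiseCyclic

theorem IsCompleteAcyclicColoring.le_adichromaticNumber {V : Type*} [Finite V]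
    {D : V → V → Prop} {k : ℕ} {c : V → Fin k} (hc : IsCompleteAcyclicColoring D c) :
    k ≤ adichromaticNumber D := by
  refine le_csSup ⟨Nat.card V, ?_⟩ ⟨c, hc⟩
  rintro l ⟨c', hc', -⟩
  simpa only [Nat.card_fin] using Nat.card_le_card_of_surjective c' hc'

theorem ava_bounded_by_max_orientation_adi_general {V : Type*} [Finite V] {G : SimpleGraph V}
    {M : ℕ} (hM : ∀ D : V → V → Prop, IsOrientation G D → adichromaticNumber D ≤ M) :
    avertexArboricity G ≤ (M + 1) * (M + 2) := by
  refine csSup_le' ?_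
  rintro k ⟨c, -, -, hc⟩
  by_contra! hk
  have hcard : (M + 2) * (M + 1) ≤ Fintype.card (Fin k) := by
    rw [Fintype.card_fin, mul_comm]
    exact hk.le
  obtain ⟨D, c', hD, hc'⟩ :=
    exists_isOrientation_isCompleteAcyclicColoring_of_card_le (Nat.le_add_left 2 M) hc hcard
  exact absurd (hc'.le_adichromaticNumber.trans (hM D hD)) (by omega)

/-- there is a function `h₂ : ℕ → ℕ` such that for every finite simple graph
`G`, `ava(G) ≤ h₂(M)`, where `M` is the maximum of `adi(D)` over all orientations `D`
of `G`. -/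
theorem ava_bounded_by_max_orientation_adi :
    ∃ h₂ : ℕ → ℕ, ∀ (V : Type) [Fintype V] (G : SimpleGraph V) (M : ℕ),
      (∃ D : V → V → Prop, IsOrientation G D ∧ adichromaticNumber D = M) →
      (∀ D : V → V → Prop, IsOrientation G D → adichromaticNumber D ≤ M) →
      avertexArboricity G ≤ h₂ M :=
  ⟨fun M => (M + 1) * (M + 2), fun _ _ _ _ _ hM => ava_bounded_by_max_orientation_adi_general hM⟩
end
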